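/- arXiv:2210.09483 — 4 statements merged into one kernel-verified Lean document; each statement's English description precedes it below -/
import Mathlib

section
/- Let γ > 1 and let U₋, U*, U₊, Ũ* ∈ (0,∞) × ℝ and speeds s₁ < 0 < s₂ and s̃₁ < 0 < s̃₂ satisfy the four Rankine–Hugoniot conditions: −s₁(U₊ − U*) + F(U₊) − F(U*) = 0, −s₂(U* − U₋) + F(U*) − F(U₋) = 0, −s̃₁(Ũ* − U₋) + F(Ũ*) − F(U₋) = 0, and −s̃₂(U₊ − Ũ*) + F(U₊) − F(Ũ*) = 0. Set t₀ = 1/(s₂ − s₁) and x₀ = s₂/(s₂ − s₁), and define 𝒲: ℝ × (0,∞) → ℝ² by: for 0 < t ≤ t₀, 𝒲(x,t) = U₋ if x < s₂t, 𝒲(x,t) = U* if s₂t < x < s₁t + 1, 𝒲(x,t) = U₊ if x > s₁t + 1; and for t > t₀, 𝒲(x,t) = U₋ if x − x₀ < s̃₁(t − t₀), 𝒲(x,t) = Ũ* if s̃₁(t − t₀) < x − x₀ < s̃₂(t − t₀), 𝒲(x,t) = U₊ if x − x₀ > s̃₂(t − t₀). Then 𝒲 is a weak solution of ∂ₜU +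 ∂ₓF(U) = 0 with initial data U₀: that is, for every smooth compactly supported test function φ: ℝ × ℝ → ℝ², one has ∫₀^∞ ∫_ℝ ( 𝒲(x,t)·∂ₜφ(x,t) + F(𝒲(x,t))·∂ₓφ(x,t) ) dx dt + ∫_ℝ U₀(x)·φ(x,0) dx = 0, where U₀(x) = U₋ for x < 0, U₀(x) = U* for 0 < x < 1, and U₀(x) = U₊ for x > 1. -/
open Real MeasureTheory

noncomputable def pP (γ v : ℝ) : ℝ := v ^ (-γ)

/-- p-system flux `F(v,u) = (-u, p v)`. -/
noncomputable def Fl (γ : ℝ) (U : ℝ × ℝ) : ℝ × ℝ := (-U.2, pP γ U.1)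

/-- Euclidean dot product on `ℝ × ℝ`. -/
def dot2 (a b : ℝ × ℝ) : ℝ := a.1 * b.1 + a.2 * b.2

/-- weighted integral along a moving frame -/
noncomputable def PP (H : ℝ → ℝ) (ψ : ℝ × ℝ → ℝ) (a s t : ℝ) : ℝ :=
  ∫ y : ℝ, H y * ψ (y + (a + s * t), t)

lemma supp_bound {ψ : ℝ × ℝ → ℝ} (hc : HasCompactSupport ψ) :
    ∃ R : ℝ, 0 ≤ R ∧ ∀ p : ℝ × ℝ, (R < |p.1| ∨ R < |p.2|) → ψ p = 0 := by
  obtain ⟨R, hR⟩ := hc.isCompact.isBounded.subset_closedBall (0 : ℝ × ℝ)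
  refine ⟨max R 0, le_max_right _ _, fun p hp => ?_⟩
  by_contra h
  have h1 : p ∈ Metric.closedBall (0 : ℝ × ℝ) R := hR (subset_tsupport _ h)
  rw [mem_closedBall_zero_iff] at h1
  have h2 : |p.1| ≤ ‖p‖ := norm_fst_le p
  have h3 : |p.2| ≤ ‖p‖ := norm_snd_le p
  have h4 := le_max_left R 0
  rcases hp with hp | hp <;> linarith

lemma slice_int {ψ : ℝ × ℝ → ℝ} (hψ : Continuous ψ) (hc : HasCompactSupport ψ)
    {H : ℝ → ℝ} (hH : Measurable H) (hb : ∀ y, |H y| ≤ 1) (b t : ℝ) :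
    Integrable (fun y : ℝ => H y * ψ (y + b, t)) := by
  refine Integrable.bdd_mul (c := 1) ?_ hH.aestronglyMeasurable (Filter.Eventually.of_forall hb)
  refine Continuous.integrable_of_hasCompactSupport (by fun_prop) ?_
  obtain ⟨R, hR0, hR⟩ := supp_bound hc
  refine HasCompactSupport.intro (isCompact_Icc (a := -R - |b|) (b := R + |b|)) fun y hy => ?_
  apply hR
  left
  by_contra hcon
  push Not at hcon
  apply hy
  simp only at hcon
  have := abs_le.1 hcon
  have := neg_abs_le b
  have := le_abs_self b
  constructor <;> linarith

lemma PP_hasDeriv {ψ : ℝ × ℝ → ℝ} (hψ : ContDiff ℝ (⊤ : ℕ∞) ψ) (hc : HasCompactSupport ψ)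
    {H : ℝ → ℝ} (hH : Measurable H) (hb : ∀ y, |H y| ≤ 1) (a s t : ℝ) :
    HasDerivAt (PP H ψ a s) (PP H (fun p => fderiv ℝ ψ p (s, 1)) a s t) t := by
  have hη : Continuous (fun p => fderiv ℝ ψ p (s, 1)) :=
    (hψ.continuous_fderiv (by simp)).clm_apply continuous_const
  have hηc : HasCompactSupport (fun p => fderiv ℝ ψ p (s, 1)) := hc.fderiv_apply ℝ _
  obtain ⟨R, hR0, hR⟩ := supp_bound hηc
  obtain ⟨C, hC⟩ := hηc.exists_bound_of_continuous hη
  have hC0 : 0 ≤ C := (norm_nonneg _).trans (hC 0)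
  set K := R + |a| + |s| * (|t| + 1) with hK
  refine (hasDerivAt_integral_of_dominated_loc_of_deriv_le
    (F := fun t y => H y * ψ (y + (a + s * t), t))
    (F' := fun t y => H y * fderiv ℝ ψ (y + (a + s * t), t) (s, 1))
    (bound := (Set.Icc (-K) K).indicator (fun _ => C))
    (Metric.ball_mem_nhds t one_pos) ?_ ?_ ?_ ?_ ?_ ?_).2
  · exact Filter.Eventually.of_forall fun t' =>
      (slice_int hψ.continuous hc hH hb _ _).aestronglyMeasurable
  · exact slice_int hψ.continuous hc hH hb _ _
  · exact (slice_int hη hηc hH hb _ _).aestronglyMeasurable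
  · refine Filter.Eventually.of_forall fun y t' ht' => ?_
    rw [norm_mul]
    by_cases hy : y ∈ Set.Icc (-K) K
    · rw [Set.indicator_of_mem hy]
      have h1 := hC (y + (a + s * t'), t')
      have h2 : ‖H y‖ ≤ 1 := hb y
      calc _ ≤ 1 * C := mul_le_mul h2 h1 (norm_nonneg _) zero_le_one
        _ = C := one_mul C
    · rw [Set.indicator_of_notMem hy]
      have : fderiv ℝ ψ (y + (a + s * t'), t') (s, 1) = 0 := by
        apply hR
        left
        by_contra hcon
        push Not at hcon
        apply hy
        simp only at hcon
        have h1 := abs_le.1 hcon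
        have h2 : |s * t'| ≤ |s| * (|t| + 1) := by
          rw [abs_mul]
          refine mul_le_mul_of_nonneg_left ?_ (abs_nonneg _)
          rw [Metric.mem_ball, Real.dist_eq] at ht'
          have := abs_sub_abs_le_abs_sub t' t
          linarith
        have h3 := abs_le.1 h2
        have := neg_abs_le a
        have := le_abs_self a
        constructor <;> linarith
      rw [this]; simp
  · exact (integrable_indicator_iff measurableSet_Icc).2 (integrableOn_const (by simp))
  · refine Filter.Eventually.of_forall fun y t' ht' => ?_
    refine HasDerivAt.const_mul _ ?_
    have h1 : HasFDerivAt ψ (fderiv ℝ ψ (y + (a + s * t'), t')) (y + (a + s * t'), t') :=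
      (hψ.differentiable (by simp) _).hasFDerivAt
    have h2 : HasDerivAt (fun t : ℝ => (y + (a + s * t), t)) (s, (1 : ℝ)) t' := by
      refine HasDerivAt.prodMk ?_ (hasDerivAt_id t')
      have := (((hasDerivAt_id t').const_mul s).const_add a).const_add y
      simpa using this
    exact HasFDerivAt.comp_hasDerivAt (f := fun t : ℝ => (y + (a + s * t), t)) t' h1 h2

lemma PP_contDiff {ψ : ℝ × ℝ → ℝ} (hψ : ContDiff ℝ (⊤ : ℕ∞) ψ) (hc : HasCompactSupport ψ)
    {H : ℝ → ℝ} (hH : Measurable H) (hb : ∀ y, |H y| ≤ 1) (a s : ℝ) :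
    ContDiff ℝ 1 (PP H ψ a s) := by
  rw [contDiff_one_iff_deriv]
  refine ⟨fun t => (PP_hasDeriv hψ hc hH hb a s t).differentiableAt, ?_⟩
  have : deriv (PP H ψ a s) = PP H (fun p => fderiv ℝ ψ p (s, 1)) a s :=
    funext fun t => (PP_hasDeriv hψ hc hH hb a s t).deriv
  rw [this]
  have h1 : ContDiff ℝ (⊤ : ℕ∞) (fun p => fderiv ℝ ψ p (s, 1)) :=
    (hψ.fderiv_right (m := (⊤ : ℕ∞)) (by simp)).clm_apply contDiff_const
  exact continuous_iff_continuousAt.2 fun t =>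
    (PP_hasDeriv h1 (hc.fderiv_apply ℝ _) hH hb a s t).continuousAt

lemma PP_compact {ψ : ℝ × ℝ → ℝ} (hc : HasCompactSupport ψ) (H : ℝ → ℝ) (a s : ℝ) :
    HasCompactSupport (PP H ψ a s) := by
  obtain ⟨R, hR0, hR⟩ := supp_bound hc
  refine HasCompactSupport.intro (isCompact_Icc (a := -R) (b := R)) fun t ht => ?_
  have : ∀ y, H y * ψ (y + (a + s * t), t) = 0 := fun y => by
    rw [hR _ (Or.inr ?_), mul_zero]
    by_contra hcon
    push Not at hcon
    exact ht (abs_le.1 hcon)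
  simp [PP, this]

lemma PP_shift (H : ℝ → ℝ) (ψ : ℝ × ℝ → ℝ) (a s t : ℝ) :
    PP H ψ a s t = ∫ x : ℝ, H (x - (a + s * t)) * ψ (x, t) := by
  rw [← integral_add_right_eq_self (μ := volume) _ (a + s * t)]
  simp [PP]

/-- dot product as a continuous linear map -/
noncomputable def dotL (c : ℝ × ℝ) : ℝ × ℝ →L[ℝ] ℝ :=
  c.1 • ContinuousLinearMap.fst ℝ ℝ ℝ + c.2 • ContinuousLinearMap.snd ℝ ℝ ℝ

lemma dotL_apply (c v : ℝ × ℝ) : dotL c v = dot2 c v := by simp [dotL, dot2]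

/-- Heaviside -/
noncomputable def hv : ℝ → ℝ := (Set.Ioi (0 : ℝ)).indicator (fun _ => 1)

lemma hv_meas : Measurable hv := measurable_const.indicator measurableSet_Ioi

lemma hv_pos {x : ℝ} (h : 0 < x) : hv x = 1 := Set.indicator_of_mem (s := Set.Ioi (0:ℝ)) h _

lemma hv_neg {x : ℝ} (h : x ≤ 0) : hv x = 0 :=
  Set.indicator_of_notMem (s := Set.Ioi (0:ℝ)) (by simpa using h) _

lemma hv_bd (x : ℝ) : |hv x| ≤ 1 := by
  rcases le_or_gt x 0 with h | h
  · rw [hv_neg h]; simp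
  · rw [hv_pos h]; simp

/-- total against the three-state pattern -/
noncomputable def AA (φ : ℝ × ℝ → ℝ × ℝ) (L M R : ℝ × ℝ) (a₁ s₁ a₂ s₂ t : ℝ) : ℝ :=
  PP (fun _ => 1) (fun p => dotL L (φ p)) 0 0 t + PP hv (fun p => dotL (M - L) (φ p)) a₁ s₁ t
    + PP hv (fun p => dotL (R - M) (φ p)) a₂ s₂ t

section
variable {φ : ℝ × ℝ → ℝ × ℝ}

lemma psi_smooth (hφ : ContDiff ℝ (⊤ : ℕ∞) φ) (c : ℝ × ℝ) :
    ContDiff ℝ (⊤ : ℕ∞) (fun p => dotL c (φ p)) := (dotL c).contDiff.comp hφ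

lemma psi_compact (hc : HasCompactSupport φ) (c : ℝ × ℝ) :
    HasCompactSupport (fun p => dotL c (φ p)) := hc.comp_left (g := dotL c) (map_zero _)

lemma psi_fderiv (hφ : ContDiff ℝ (⊤ : ℕ∞) φ) (c p v : ℝ × ℝ) :
    fderiv ℝ (fun p => dotL c (φ p)) p v = dot2 c (fderiv ℝ φ p v) := by
  have h := (dotL c).hasFDerivAt.comp p (hφ.differentiable (by simp) p).hasFDerivAt
  have h' : fderiv ℝ (fun p => dotL c (φ p)) p = (dotL c).comp (fderiv ℝ φ p) := h.fderiv
  rw [h', ContinuousLinearMap.comp_apply, dotL_apply]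

lemma AA_contDiff (hφ : ContDiff ℝ (⊤ : ℕ∞) φ) (hc : HasCompactSupport φ)
    (L M R : ℝ × ℝ) (a₁ s₁ a₂ s₂ : ℝ) : ContDiff ℝ 1 (AA φ L M R a₁ s₁ a₂ s₂) :=
  ((PP_contDiff (psi_smooth hφ L) (psi_compact hc L) measurable_const (by simp) 0 0).add
    (PP_contDiff (psi_smooth hφ _) (psi_compact hc _) hv_meas hv_bd a₁ s₁)).add
    (PP_contDiff (psi_smooth hφ _) (psi_compact hc _) hv_meas hv_bd a₂ s₂)

lemma AA_compact (hc : HasCompactSupport φ)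
    (L M R : ℝ × ℝ) (a₁ s₁ a₂ s₂ : ℝ) : HasCompactSupport (AA φ L M R a₁ s₁ a₂ s₂) :=
  ((PP_compact (psi_compact hc L) _ 0 0).add (PP_compact (psi_compact hc _) _ a₁ s₁)).add
    (PP_compact (psi_compact hc _) _ a₂ s₂)

lemma AA_deriv (hφ : ContDiff ℝ (⊤ : ℕ∞) φ) (hc : HasCompactSupport φ)
    (L M R : ℝ × ℝ) (a₁ s₁ a₂ s₂ t : ℝ) :
    deriv (AA φ L M R a₁ s₁ a₂ s₂) t =
      PP (fun _ => 1) (fun p => fderiv ℝ (fun p => dotL L (φ p)) p (0, 1)) 0 0 t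
      + PP hv (fun p => fderiv ℝ (fun p => dotL (M - L) (φ p)) p (s₁, 1)) a₁ s₁ t
      + PP hv (fun p => fderiv ℝ (fun p => dotL (R - M) (φ p)) p (s₂, 1)) a₂ s₂ t :=
  (((PP_hasDeriv (psi_smooth hφ L) (psi_compact hc L) measurable_const (by simp) 0 0 t).add
    (PP_hasDeriv (psi_smooth hφ _) (psi_compact hc _) hv_meas hv_bd a₁ s₁ t)).add
    (PP_hasDeriv (psi_smooth hφ _) (psi_compact hc _) hv_meas hv_bd a₂ s₂ t)).deriv

lemma slice_int' {ψ : ℝ × ℝ → ℝ} (hψ : Continuous ψ) (hc : HasCompactSupport ψ)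
    {H : ℝ → ℝ} (hH : Measurable H) (hb : ∀ y, |H y| ≤ 1) (b t : ℝ) :
    Integrable (fun x : ℝ => H (x - b) * ψ (x, t)) := by
  have := slice_int hψ hc (H := fun x => H (x - b)) (hH.comp (measurable_id.sub_const b))
    (fun y => hb _) 0 t
  simpa using this

lemma three_cases {ξ₁ ξ₂ : ℝ} (hξ : ξ₁ ≤ ξ₂) {P : ℝ → Prop}
    (h1 : ∀ x, x < ξ₁ → P x) (h2 : ∀ x, ξ₁ < x → x < ξ₂ → P x) (h3 : ∀ x, ξ₂ < x → P x) :
    ∀ᵐ x : ℝ, P x := by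
  have e1 : ∀ᵐ x : ℝ, x ≠ ξ₁ := Measure.ae_ne volume ξ₁
  have e2 : ∀ᵐ x : ℝ, x ≠ ξ₂ := Measure.ae_ne volume ξ₂
  filter_upwards [e1, e2] with x hx1 hx2
  rcases lt_or_gt_of_ne hx1 with h | h
  · exact h1 x h
  · rcases lt_or_gt_of_ne hx2 with h' | h'
    · exact h2 x h h'
    · exact h3 x h'

lemma AA_eq (hφ : ContDiff ℝ (⊤ : ℕ∞) φ) (hc : HasCompactSupport φ)
    (L M R : ℝ × ℝ) (a₁ s₁ a₂ s₂ t : ℝ) (hξ : a₁ + s₁ * t ≤ a₂ + s₂ * t) (w : ℝ → ℝ × ℝ)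
    (h1 : ∀ x, x < a₁ + s₁ * t → w x = L)
    (h2 : ∀ x, a₁ + s₁ * t < x → x < a₂ + s₂ * t → w x = M)
    (h3 : ∀ x, a₂ + s₂ * t < x → w x = R) :
    ∫ x, dot2 (w x) (φ (x, t)) = AA φ L M R a₁ s₁ a₂ s₂ t := by
  unfold AA
  rw [PP_shift, PP_shift, PP_shift, ← integral_add, ← integral_add]
  · refine integral_congr_ae (three_cases hξ ?_ ?_ ?_)
    · intro x hx
      simp only [dotL_apply]
      rw [h1 x hx, hv_neg (by linarith), hv_neg (by linarith)]; ring
    · intro x hx hx'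
      simp only [dotL_apply]
      rw [h2 x hx hx', hv_pos (by linarith), hv_neg (by linarith)]; simp [dot2]; ring
    · intro x hx
      simp only [dotL_apply]
      rw [h3 x hx, hv_pos (by linarith), hv_pos (by linarith)]; simp [dot2]; ring
  · exact (slice_int' (psi_smooth hφ L).continuous (psi_compact hc L) (H := fun _ => 1)
      measurable_const (by simp) 0 t).add
      (slice_int' (psi_smooth hφ _).continuous (psi_compact hc _) hv_meas hv_bd _ t)
  · exact (slice_int' (psi_smooth hφ _).continuous (psi_compact hc _) hv_meas hv_bd _ t)
  · exact slice_int' (psi_smooth hφ L).continuous (psi_compact hc L) (H := fun _ => 1)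
      measurable_const (by simp) 0 t
  · exact (slice_int' (psi_smooth hφ _).continuous (psi_compact hc _) hv_meas hv_bd _ t)

lemma dx_zero (hφ : ContDiff ℝ (⊤ : ℕ∞) φ) (hc : HasCompactSupport φ) (c : ℝ × ℝ) (t : ℝ) :
    Integrable (fun x : ℝ => fderiv ℝ (fun p => dotL c (φ p)) (x, t) (1, 0)) ∧
    ∫ x : ℝ, fderiv ℝ (fun p => dotL c (φ p)) (x, t) (1, 0) = 0 := by
  have hs := psi_smooth hφ c
  have hk := psi_compact hc c
  have i1 : Integrable (fun x : ℝ => fderiv ℝ (fun p => dotL c (φ p)) (x, t) (1, 0)) := by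
    have := slice_int (H := fun _ => 1)
      ((hs.continuous_fderiv (by simp)).clm_apply (continuous_const (y := ((1:ℝ), (0:ℝ)))))
      (hk.fderiv_apply ℝ _) measurable_const (by simp) 0 t
    simpa using this
  have i2 : Integrable (fun x : ℝ => dotL c (φ (x, t))) := by
    have := slice_int (H := fun _ => 1) hs.continuous hk measurable_const (by simp) 0 t
    simpa using this
  refine ⟨i1, integral_eq_zero_of_hasDerivAt_of_integrable (f := fun x => dotL c (φ (x, t)))
    (fun x => ?_) i1 i2⟩
  have h1 : HasFDerivAt (fun p => dotL c (φ p)) _ (x, t) :=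
    (hs.differentiable (by simp) _).hasFDerivAt
  exact HasFDerivAt.comp_hasDerivAt (l := fun p => dotL c (φ p))
    (f := fun x : ℝ => (x, t)) x h1 ((hasDerivAt_id x).prodMk (hasDerivAt_const x t))

lemma RH_dot {s : ℝ} {A B FA FB : ℝ × ℝ} (h : (-s) • (A - B) + (FA - FB) = 0) (v : ℝ × ℝ) :
    dot2 FA v = dot2 FB v + s * dot2 (A - B) v := by
  have e1 := congrArg Prod.fst h
  have e2 := congrArg Prod.snd h
  simp at e1 e2
  simp only [dot2, Prod.fst_sub, Prod.snd_sub]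
  linear_combination v.1 * e1 + v.2 * e2

lemma inner_eq (γ : ℝ) (hφ : ContDiff ℝ (⊤ : ℕ∞) φ) (hc : HasCompactSupport φ)
    (L M R : ℝ × ℝ) (a₁ s₁ a₂ s₂ t : ℝ)
    (r1 : (-s₁) • (M - L) + (Fl γ M - Fl γ L) = 0)
    (r2 : (-s₂) • (R - M) + (Fl γ R - Fl γ M) = 0)
    (hξ : a₁ + s₁ * t ≤ a₂ + s₂ * t) (w : ℝ → ℝ × ℝ)
    (h1 : ∀ x, x < a₁ + s₁ * t → w x = L)
    (h2 : ∀ x, a₁ + s₁ * t < x → x < a₂ + s₂ * t → w x = M)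
    (h3 : ∀ x, a₂ + s₂ * t < x → w x = R) :
    ∫ x, (dot2 (w x) (fderiv ℝ φ (x, t) (0, 1)) + dot2 (Fl γ (w x)) (fderiv ℝ φ (x, t) (1, 0)))
      = deriv (AA φ L M R a₁ s₁ a₂ s₂) t := by
  rw [AA_deriv hφ hc, PP_shift, PP_shift, PP_shift]
  have hcont : ∀ (c v : ℝ × ℝ), Continuous (fun p => fderiv ℝ (fun p => dotL c (φ p)) p v) :=
    fun c v => ((psi_smooth hφ c).continuous_fderiv (by simp)).clm_apply continuous_const
  have hcomp : ∀ (c v : ℝ × ℝ),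
      HasCompactSupport (fun p => fderiv ℝ (fun p => dotL c (φ p)) p v) :=
    fun c v => (psi_compact hc c).fderiv_apply ℝ v
  have I0 := slice_int' (hcont L (0, 1)) (hcomp L (0, 1)) (H := fun _ => 1) measurable_const
    (by simp) (0 + 0 * t) t
  have I1 := slice_int' (hcont (M - L) (s₁, 1)) (hcomp (M - L) (s₁, 1)) hv_meas hv_bd
    (a₁ + s₁ * t) t
  have I2 := slice_int' (hcont (R - M) (s₂, 1)) (hcomp (R - M) (s₂, 1)) hv_meas hv_bd
    (a₂ + s₂ * t) t
  obtain ⟨J, J0⟩ := dx_zero hφ hc (Fl γ L) t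
  have T1 := integral_add I0 I1
  have T2 := integral_add (I0.add I1) I2
  have T3 := integral_add ((I0.add I1).add I2) J
  simp only [Pi.add_apply] at T2 T3
  rw [J0, add_zero] at T3
  rw [← T1, ← T2, ← T3]
  have key : ∀ (x s : ℝ) (c : ℝ × ℝ), dot2 c (fderiv ℝ φ (x, t) (s, 1)) =
      s * dot2 c (fderiv ℝ φ (x, t) (1, 0)) + dot2 c (fderiv ℝ φ (x, t) (0, 1)) := by
    intro x s c
    have : ((s, 1) : ℝ × ℝ) = s • (1, 0) + (0, 1) := by simp
    rw [this, map_add, map_smul]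
    simp [dot2]; ring
  have sub : ∀ a b v : ℝ × ℝ, dot2 (a - b) v = dot2 a v - dot2 b v := by
    intro a b v; simp [dot2]; ring
  refine integral_congr_ae (three_cases hξ ?_ ?_ ?_)
  · intro x hx
    simp only [psi_fderiv hφ]
    rw [h1 x hx, hv_neg (by linarith), hv_neg (by linarith)]; ring
  · intro x hx hx'
    simp only [psi_fderiv hφ]
    rw [h2 x hx hx', hv_pos (by linarith), hv_neg (by linarith), RH_dot r1, key x s₁]; simp only [sub]; ring
  · intro x hx
    simp only [psi_fderiv hφ]
    rw [h3 x hx, hv_pos (by linarith), hv_pos (by linarith), RH_dot r2, RH_dot r1, key x s₁, key x s₂]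
    simp only [sub]; ring

end

/-- the piecewise-constant two-shock pattern is a weak solution of
`∂ₜU + ∂ₓF(U) = 0` with the three-state initial data. -/
theorem two_shock_pattern_is_weak_solution
    (γ : ℝ) (hγ : 1 < γ)
    (Um Us Up Ut : ℝ × ℝ) (hUm : 0 < Um.1) (hUs : 0 < Us.1) (hUp : 0 < Up.1) (hUt : 0 < Ut.1)
    (s₁ s₂ st₁ st₂ : ℝ) (hs₁ : s₁ < 0) (hs₂ : 0 < s₂) (hst₁ : st₁ < 0) (hst₂ : 0 < st₂)
    (hRH1 : (-s₁) • (Up - Us) + (Fl γ Up - Fl γ Us) = 0)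
    (hRH2 : (-s₂) • (Us - Um) + (Fl γ Us - Fl γ Um) = 0)
    (hRH3 : (-st₁) • (Ut - Um) + (Fl γ Ut - Fl γ Um) = 0)
    (hRH4 : (-st₂) • (Up - Ut) + (Fl γ Up - Fl γ Ut) = 0)
    (t₀ x₀ : ℝ) (ht₀ : t₀ = 1 / (s₂ - s₁)) (hx₀ : x₀ = s₂ / (s₂ - s₁))
    (W : ℝ → ℝ → ℝ × ℝ)
    (hW1 : ∀ x t : ℝ, 0 < t → t ≤ t₀ → x < s₂ * t → W x t = Um)
    (hW2 : ∀ x t : ℝ, 0 < t → t ≤ t₀ → s₂ * t < x → x < s₁ * t + 1 → W x t = Us)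
    (hW3 : ∀ x t : ℝ, 0 < t → t ≤ t₀ → s₁ * t + 1 < x → W x t = Up)
    (hW4 : ∀ x t : ℝ, t₀ < t → x - x₀ < st₁ * (t - t₀) → W x t = Um)
    (hW5 : ∀ x t : ℝ, t₀ < t → st₁ * (t - t₀) < x - x₀ → x - x₀ < st₂ * (t - t₀) → W x t = Ut)
    (hW6 : ∀ x t : ℝ, t₀ < t → st₂ * (t - t₀) < x - x₀ → W x t = Up)
    (U₀ : ℝ → ℝ × ℝ)
    (hU₀1 : ∀ x : ℝ, x < 0 → U₀ x = Um)
    (hU₀2 : ∀ x : ℝ, 0 < x → x < 1 → U₀ x = Us)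
    (hU₀3 : ∀ x : ℝ, 1 < x → U₀ x = Up) :
    ∀ φ : ℝ × ℝ → ℝ × ℝ, ContDiff ℝ (⊤ : ℕ∞) φ → HasCompactSupport φ →
      (∫ t in Set.Ioi (0 : ℝ), ∫ x : ℝ,
          (dot2 (W x t) (fderiv ℝ φ (x, t) (0, 1)) +
            dot2 (Fl γ (W x t)) (fderiv ℝ φ (x, t) (1, 0))))
        + (∫ x : ℝ, dot2 (U₀ x) (φ (x, 0))) = 0 := by
  intro φ hφ hc
  have hd : 0 < s₂ - s₁ := by linarith
  have ht0 : 0 < t₀ := by rw [ht₀]; positivity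
  have e1 : s₂ * t₀ = x₀ := by rw [ht₀, hx₀]; ring
  have e2 : s₁ * t₀ + 1 = x₀ := by rw [ht₀, hx₀]; field_simp; ring
  set A := AA φ Um Us Up 0 s₂ 1 s₁ with hA
  set B := AA φ Um Ut Up (x₀ - st₁ * t₀) st₁ (x₀ - st₂ * t₀) st₂ with hB
  have hAd : ContDiff ℝ 1 A := AA_contDiff hφ hc _ _ _ _ _ _ _
  have hBd : ContDiff ℝ 1 B := AA_contDiff hφ hc _ _ _ _ _ _ _
  have hAc : HasCompactSupport A := AA_compact hc _ _ _ _ _ _ _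
  have hBc : HasCompactSupport B := AA_compact hc _ _ _ _ _ _ _
  have hAi : Integrable (deriv A) :=
    (hAd.continuous_deriv le_rfl).integrable_of_hasCompactSupport hAc.deriv
  have hBi : Integrable (deriv B) :=
    (hBd.continuous_deriv le_rfl).integrable_of_hasCompactSupport hBc.deriv
  have hU : ∫ x : ℝ, dot2 (U₀ x) (φ (x, 0)) = A 0 := by
    refine AA_eq hφ hc _ _ _ _ _ _ _ _ (by simp) _ ?_ ?_ ?_
    · intro x hx; exact hU₀1 x (by simpa using hx)
    · intro x hx hx'; exact hU₀2 x (by simpa using hx) (by simpa using hx')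
    · intro x hx; exact hU₀3 x (by simpa using hx)
  have hAB : A t₀ = B t₀ := by
    rw [hA, hB, ← AA_eq hφ hc _ _ _ _ _ _ _ t₀ (by linarith)
        (fun x => if x < x₀ then Um else Up), 
      ← AA_eq hφ hc _ _ _ _ _ _ _ t₀ (by linarith) (fun x => if x < x₀ then Um else Up)]
    · intro x hx; exact if_pos (by linarith)
    · intro x hx hx'; exfalso; linarith
    · intro x hx; exact if_neg (by linarith)
    · intro x hx; exact if_pos (by linarith)
    · intro x hx hx'; exfalso; linarith
    · intro x hx; exact if_neg (by linarith)
  set f : ℝ → ℝ := fun t => ∫ x : ℝ,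
          (dot2 (W x t) (fderiv ℝ φ (x, t) (0, 1)) +
            dot2 (Fl γ (W x t)) (fderiv ℝ φ (x, t) (1, 0))) with hf
  have f1 : Set.EqOn f (deriv A) (Set.Ioc 0 t₀) := by
    intro t ht
    have hle : (s₂ - s₁) * t ≤ 1 := by
      calc _ ≤ (s₂ - s₁) * t₀ := mul_le_mul_of_nonneg_left ht.2 hd.le
        _ = 1 := by linarith
    refine inner_eq γ hφ hc _ _ _ _ _ _ _ t hRH2 hRH1 (by linarith) (fun x => W x t) ?_ ?_ ?_
    · intro x hx; exact hW1 x t ht.1 ht.2 (by linarith)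
    · intro x hx hx'; exact hW2 x t ht.1 ht.2 (by linarith) (by linarith)
    · intro x hx; exact hW3 x t ht.1 ht.2 (by linarith)
  have f2 : Set.EqOn f (deriv B) (Set.Ioi t₀) := by
    intro t ht
    have ht' : 0 < t - t₀ := sub_pos.2 ht
    have p1 := mul_pos hst₂ ht'
    have p2 := mul_neg_of_neg_of_pos hst₁ ht'
    refine inner_eq γ hφ hc _ _ _ _ _ _ _ t hRH3 hRH4 (by linarith) (fun x => W x t) ?_ ?_ ?_
    · intro x hx; exact hW4 x t ht (by linarith)
    · intro x hx hx'; exact hW5 x t ht (by linarith) (by linarith)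
    · intro x hx; exact hW6 x t ht (by linarith)
  have i1 : IntegrableOn f (Set.Ioc 0 t₀) :=
    (integrableOn_congr_fun f1 measurableSet_Ioc).2 hAi.integrableOn
  have i2 : IntegrableOn f (Set.Ioi t₀) :=
    (integrableOn_congr_fun f2 measurableSet_Ioi).2 hBi.integrableOn
  have hdisj : Disjoint (Set.Ioc 0 t₀) (Set.Ioi t₀) := Set.Ioc_disjoint_Ioi le_rfl
  have hun : Set.Ioc 0 t₀ ∪ Set.Ioi t₀ = Set.Ioi 0 := Set.Ioc_union_Ioi_eq_Ioi ht0.le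
  have hsplit : ∫ t in Set.Ioi 0, f t = (∫ t in Set.Ioc 0 t₀, deriv A t) +
      ∫ t in Set.Ioi t₀, deriv B t := by
    rw [← hun, setIntegral_union hdisj measurableSet_Ioi i1 i2,
      setIntegral_congr_fun measurableSet_Ioc f1, setIntegral_congr_fun measurableSet_Ioi f2]
  have hsA : ∫ t in Set.Ioi 0, deriv A t = (∫ t in Set.Ioc 0 t₀, deriv A t) +
      ∫ t in Set.Ioi t₀, deriv A t := by
    rw [← hun, setIntegral_union hdisj measurableSet_Ioi hAi.integrableOn hAi.integrableOn]
  rw [hAc.integral_Ioi_deriv_eq hAd, hAc.integral_Ioi_deriv_eq hAd] at hsA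
  rw [hBc.integral_Ioi_deriv_eq hBd] at hsplit
  rw [hU, hsplit]
  linarith
end

section
/- Let γ > 1, let U* = (v*, u*) and U₊ = (v₊, u₊) with v*, v₊ > 0 satisfy the Rankine–Hugoniot condition −s₁(U₊ − U*) + F(U₊) − F(U*) = 0 for some speed s₁ satisfying the Lax condition λ₁(v₊) < s₁ < λ₁(v*) < 0, and let a > 0 satisfy the sub-characteristic condition √(−p′(v)) < a for every v in the closed interval between v* and v₊. Then there exists an s₁-relaxation shock profile U^{S₁} connecting U* (at −∞) and U₊ (at +∞), and it is unique up to a shift: any two s₁-relaxation shock profiles connecting U* and U₊ are translates of one another, i.e. if U and Ū are two such profiles then there exists h ∈ ℝ with Ū(ξ) = U(ξ + h) for all ξ ∈ ℝ. -/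
open Real Filter Topology

noncomputable def lam1 (γ v : ℝ) : ℝ := -Real.sqrt (γ * v ^ (-γ - 1))
noncomputable def lam2 (γ v : ℝ) : ℝ := Real.sqrt (γ * v ^ (-γ - 1))

/-- an `s`-relaxation shock profile connecting `Ul` (at `-∞`) and `Ur` (at `+∞`):
a bounded `C²` map `U = (V,W) : ℝ → (0,∞) × ℝ` with
`(a² - s²) U'' = -s U' + (F ∘ U)'`, `U → Ul` at `-∞`, `U → Ur` at `+∞`, `U' → 0` at `±∞`. -/
def IsProfile (γ a s : ℝ) (Ul Ur : ℝ × ℝ) (U : ℝ → ℝ × ℝ) : Prop :=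
  ContDiff ℝ 2 U ∧ (∀ ξ, 0 < (U ξ).1) ∧ Bornology.IsBounded (Set.range U) ∧
  (∀ ξ, (a ^ 2 - s ^ 2) • deriv (deriv U) ξ = (-s) • deriv U ξ + deriv (Fl γ ∘ U) ξ) ∧
  Tendsto U atBot (𝓝 Ul) ∧ Tendsto U atTop (𝓝 Ur) ∧
  Tendsto (deriv U) atBot (𝓝 0) ∧ Tendsto (deriv U) atTop (𝓝 0)


open MeasureTheory in
noncomputable def relT (σ : ℝ) (f : ℝ → ℝ) (τ : ℝ) : ℝ :=
  ∫ t in Set.Ioi (0:ℝ), Real.exp (-σ * t) * f (τ - t)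

open MeasureTheory in
def relOk (σ : ℝ) (f : ℝ → ℝ) : Prop :=
  ∀ τ, IntegrableOn (fun t => Real.exp (-σ * t) * f (τ - t)) (Set.Ioi (0:ℝ))

lemma relT_mono {σ : ℝ} {f g : ℝ → ℝ} (hf : relOk σ f) (hg : relOk σ g) (h : ∀ x, f x ≤ g x)
    (τ : ℝ) : relT σ f τ ≤ relT σ g τ := by
  unfold relT
  exact MeasureTheory.integral_mono (hf τ) (hg τ)
    (fun t => mul_le_mul_of_nonneg_left (h _) (Real.exp_pos _).le)

lemma relOk_of_bdd {σ : ℝ} (hσ : 0 < σ) {f : ℝ → ℝ} (hm : Measurable f) {C : ℝ}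
    (hC : ∀ x, |f x| ≤ C) : relOk σ f := by
  intro τ
  have h1 := (exp_neg_integrableOn_Ioi 0 hσ)
  refine MeasureTheory.Integrable.mul_bdd (c := C) h1 ?_ ?_
  · exact (hm.comp (measurable_const.sub measurable_id)).aestronglyMeasurable
  · exact Filter.Eventually.of_forall (fun x => hC _)

lemma relT_monotone {σ : ℝ} {f : ℝ → ℝ} (hf : relOk σ f) (h : Monotone f) :
    Monotone (relT σ f) := by
  intro x y hxy
  unfold relT
  exact MeasureTheory.integral_mono (hf x) (hf y)
    (fun t => mul_le_mul_of_nonneg_left (h (by linarith)) (Real.exp_pos _).le)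

lemma relOk_exp {σ k : ℝ} (h : 0 < σ + k) (A : ℝ) : relOk σ (fun t => A * Real.exp (k * t)) := by
  intro τ
  have h1 := (exp_neg_integrableOn_Ioi 0 h).const_mul (A * Real.exp (k * τ))
  refine h1.congr (Filter.Eventually.of_forall fun t => ?_)
  have : Real.exp (k * τ) * Real.exp (-(σ + k) * t) = Real.exp (-σ * t) * Real.exp (k * (τ - t)) := by
    rw [← Real.exp_add, ← Real.exp_add]; congr 1; ring
  simp only
  linear_combination A * this

lemma relT_exp {σ k : ℝ} (h : 0 < σ + k) (A τ : ℝ) :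
    relT σ (fun t => A * Real.exp (k * t)) τ = A / (σ + k) * Real.exp (k * τ) := by
  unfold relT
  have : ∀ t, Real.exp (-σ * t) * (A * Real.exp (k * (τ - t)))
      = (A * Real.exp (k * τ)) * Real.exp (-(σ + k) * t) := by
    intro t
    have : Real.exp (k * τ) * Real.exp (-(σ + k) * t) = Real.exp (-σ * t) * Real.exp (k * (τ - t)) := by
      rw [← Real.exp_add, ← Real.exp_add]; congr 1; ring
    linear_combination -A * this
  simp_rw [this]
  rw [MeasureTheory.integral_const_mul, integral_exp_mul_Ioi (by linarith)]
  field_simp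
  simp

lemma relT_const {σ : ℝ} (h : 0 < σ) (A τ : ℝ) :
    relT σ (fun _ => A) τ = A / σ := by
  have := relT_exp (σ := σ) (k := 0) (by simpa using h) A τ
  simpa using this

lemma relT_sub {σ : ℝ} {f g : ℝ → ℝ} (hf : relOk σ f) (hg : relOk σ g) (τ : ℝ) :
    relT σ (fun t => f t - g t) τ = relT σ f τ - relT σ g τ := by
  unfold relT
  rw [← MeasureTheory.integral_sub (hf τ) (hg τ)]
  congr 1; ext t; ring

lemma relOk_sub {σ : ℝ} {f g : ℝ → ℝ} (hf : relOk σ f) (hg : relOk σ g) :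
    relOk σ (fun t => f t - g t) := by
  intro τ
  refine ((hf τ).sub (hg τ)).congr (Filter.Eventually.of_forall fun t => ?_)
  simp; ring

lemma relT_bdd {σ : ℝ} (hσ : 0 < σ) {f : ℝ → ℝ} (hm : Measurable f) {C : ℝ}
    (hC : ∀ x, |f x| ≤ C) (x : ℝ) : |relT σ f x| ≤ C / σ := by
  have h0 := relOk_of_bdd hσ hm hC
  have hc : ∀ A : ℝ, relOk σ (fun _ => A) := fun A =>
    relOk_of_bdd hσ measurable_const (C := |A|) (fun _ => le_rfl)
  rw [abs_le]
  constructor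
  · have := relT_mono (hc (-C)) h0 (fun x => (abs_le.1 (hC x)).1) x
    rw [relT_const hσ] at this; rw [← neg_div]; exact this
  · have := relT_mono h0 (hc (C)) (fun x => (abs_le.1 (hC x)).2) x
    rwa [relT_const hσ] at this

lemma relT_tendsto {σ : ℝ} (hσ : 0 < σ) {f : ℝ → ℝ} (hm : Measurable f) {C : ℝ}
    (hC : ∀ x, |f x| ≤ C) {l : Filter ℝ} [l.IsCountablyGenerated] {L : ℝ}
    (h : ∀ t, Tendsto (fun τ => f (τ - t)) l (𝓝 L)) : Tendsto (relT σ f) l (𝓝 (L / σ)) := by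
  rw [← relT_const hσ L 0]
  unfold relT
  have h1 := (exp_neg_integrableOn_Ioi 0 hσ).mul_const C
  refine MeasureTheory.tendsto_integral_filter_of_dominated_convergence
    (fun t => Real.exp (-σ * t) * C) ?_ ?_ h1 ?_
  · exact Filter.Eventually.of_forall fun τ => (relOk_of_bdd hσ hm hC τ).aestronglyMeasurable
  · refine Filter.Eventually.of_forall fun τ => Filter.Eventually.of_forall fun t => ?_
    rw [norm_mul, Real.norm_eq_abs, abs_of_pos (Real.exp_pos _)]
    exact mul_le_mul_of_nonneg_left (hC _) (Real.exp_pos _).le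
  · exact Filter.Eventually.of_forall fun t => (h t).const_mul _

lemma relT_eq (σ : ℝ) (f : ℝ → ℝ) (τ : ℝ) :
    relT σ f τ = Real.exp (-σ * τ) * ∫ r in Set.Iic τ, Real.exp (σ * r) * f r := by
  unfold relT
  rw [← MeasureTheory.integral_const_mul]
  have e : ∀ t, Real.exp (-σ * t) * f (τ - t) =
    (fun r => Real.exp (-σ * τ) * (Real.exp (σ * r) * f r)) (τ - t) := by
    intro t
    simp only
    rw [← mul_assoc, ← Real.exp_add]; congr 2; ring
  have key : ∀ g : ℝ → ℝ, ∫ t in Set.Ioi (0:ℝ), g (τ - t) = ∫ r in Set.Iic τ, g r := by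
    intro g
    have := integral_comp_neg_Ioi (c := 0) (fun x => g (τ + x))
    simp only [← sub_eq_add_neg, neg_zero] at this
    rw [this, ← MeasureTheory.integral_indicator measurableSet_Iic,
      ← MeasureTheory.integral_indicator measurableSet_Iic]
    rw [← MeasureTheory.integral_add_left_eq_self (fun x => (Set.Iic τ).indicator g x) τ]
    congr 1; ext x
    simp [Set.indicator]
  rw [← key (fun r => Real.exp (-σ * τ) * (Real.exp (σ * r) * f r))]
  congr 1; ext t; exact e t

lemma relOk_Iic {σ : ℝ} (hσ : 0 < σ) {f : ℝ → ℝ} (hm : Measurable f) {C : ℝ}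
    (hC : ∀ x, |f x| ≤ C) (τ : ℝ) :
    MeasureTheory.IntegrableOn (fun r => Real.exp (σ * r) * f r) (Set.Iic τ) := by
  refine MeasureTheory.Integrable.mul_bdd (c := C) (integrableOn_exp_mul_Iic hσ τ) ?_ ?_
  · exact hm.aestronglyMeasurable
  · exact Filter.Eventually.of_forall (fun x => hC _)

lemma relT_split {σ : ℝ} (hσ : 0 < σ) {f : ℝ → ℝ} (hm : Measurable f) {C : ℝ}
    (hC : ∀ x, |f x| ≤ C) : relT σ f = fun τ =>
     Real.exp (-σ * τ) * ((∫ r in Set.Iic 0, Real.exp (σ * r) * f r)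
      + ∫ r in (0:ℝ)..τ, Real.exp (σ * r) * f r) := by
  ext τ
  rw [relT_eq, ← intervalIntegral.integral_Iic_sub_Iic (relOk_Iic hσ hm hC 0) (relOk_Iic hσ hm hC τ)]
  ring

lemma relT_continuous {σ : ℝ} (hσ : 0 < σ) {f : ℝ → ℝ} (hm : Measurable f) {C : ℝ}
    (hC : ∀ x, |f x| ≤ C) : Continuous (relT σ f) := by
  rw [relT_split hσ hm hC]
  have : Continuous (fun τ => ∫ r in (0:ℝ)..τ, Real.exp (σ * r) * f r) := by
    refine intervalIntegral.continuous_primitive (fun a b => ?_) 0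
    have := (relOk_Iic hσ hm hC (max a b)).mono_set
      (show Set.uIoc a b ⊆ Set.Iic (max a b) from
      (fun x hx => (Set.mem_uIoc.1 hx).elim (fun h => h.2.trans (le_max_right _ _))
        (fun h => h.2.trans (le_max_left _ _))))
    exact intervalIntegrable_iff.2 this
  fun_prop

lemma relT_hasDerivAt {σ : ℝ} (hσ : 0 < σ) {f : ℝ → ℝ} (hm : Continuous f) {C : ℝ}
    (hC : ∀ x, |f x| ≤ C) (τ : ℝ) : HasDerivAt (relT σ f) (-σ * relT σ f τ + f τ) τ := by
  rw [relT_split hσ hm.measurable hC]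
  have hc : Continuous (fun r => Real.exp (σ * r) * f r) := by fun_prop
  have h1 : HasDerivAt (fun τ => ∫ r in (0:ℝ)..τ, Real.exp (σ * r) * f r) 
    (Real.exp (σ * τ) * f τ) τ := hc.integral_hasStrictDerivAt 0 τ |>.hasDerivAt
  have h2 : HasDerivAt (fun τ => Real.exp (-σ * τ)) (Real.exp (-σ * τ) * (-σ * 1)) τ :=
    ((hasDerivAt_id τ).const_mul (-σ)).exp
  have h3 := h2.mul (h1.const_add (∫ r in Set.Iic 0, Real.exp (σ * r) * f r))
  refine h3.congr_deriv ?_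
  have : Real.exp (-σ * τ) * Real.exp (σ * τ) = 1 := by
    rw [← Real.exp_add]; simp
  linear_combination f τ * this

lemma rel_exist {σ μ δ B : ℝ} (hσ : 0 < σ) (hμ : σ < μ) (hδ : 0 < δ) (hB : 0 < B)
    {P : ℝ → ℝ} (hPm : Monotone P) (hPc : Continuous P) (hP0 : P 0 = 0)
    (hPu : ∀ w, 0 ≤ w → P w ≤ μ ^ 2 * w) (hPl : ∀ w, 0 ≤ w → μ ^ 2 * w - B * w ^ 2 ≤ P w)
    (hPδ : P δ = σ ^ 2 * δ) (hPn : ∀ w, 0 < w → w < δ → P w ≠ σ ^ 2 * w) :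
    ∃ w u : ℝ → ℝ, (∀ τ, HasDerivAt w (-σ * w τ + u τ) τ) ∧
      (∀ τ, HasDerivAt u (-σ * u τ + P (w τ)) τ) ∧ (∀ τ, 0 ≤ w τ) ∧ (∀ τ, w τ ≤ δ) ∧
      Tendsto w atBot (𝓝 0) ∧ Tendsto w atTop (𝓝 δ) ∧ 
      Tendsto u atBot (𝓝 0) ∧ Tendsto u atTop (𝓝 (σ * δ)) ∧ 
      (∃ C, ∀ τ, |u τ| ≤ C) := by
  obtain ⟨κ, hκ⟩ : ∃ κ, κ = μ - σ := ⟨_, rfl⟩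
  have hκ0 : 0 < κ := by linarith
  obtain ⟨M, hM0, hM, hMδ⟩ : ∃ M, 0 < M ∧ μ ^ 2 * M + B ≤ M * (σ + 2 * κ) ^ 2 ∧ 1 ≤ 4 * M * δ := by
    have h1 : 0 < (σ + 2 * κ) ^ 2 - μ ^ 2 := by
      rw [show μ = σ + κ by linarith]; nlinarith
    have h3 : 0 < 1 / (4 * δ) := by positivity
    have h4 : 0 < B / ((σ + 2 * κ) ^ 2 - μ ^ 2) := by positivity
    refine ⟨B / ((σ + 2 * κ) ^ 2 - μ ^ 2) + 1 / (4 * δ), by positivity, ?_, ?_⟩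
    · have : B / ((σ + 2 * κ) ^ 2 - μ ^ 2) * ((σ + 2 * κ) ^ 2 - μ ^ 2) = B := by
        field_simp
      nlinarith
    · have : 4 * (1 / (4 * δ)) * δ = 1 := by field_simp
      nlinarith
  have hPδ0 : 0 ≤ P δ := by rw [hPδ]; positivity
  -- the admissible class
  let S : Set (ℝ → ℝ) := {v | Monotone v ∧ (∀ τ, 0 ≤ v τ) ∧ (∀ τ, v τ ≤ δ) ∧
    (∀ τ, v τ ≤ Real.exp (κ * τ)) ∧ ∀ τ, Real.exp (κ * τ) - M * Real.exp (2 * κ * τ) ≤ v τ}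
  let Φ : (ℝ → ℝ) → (ℝ → ℝ) := fun v => relT σ (relT σ (fun τ => P (v τ)))
  have hc : ∀ A : ℝ, relOk σ (fun _ => A) := fun A =>
    relOk_of_bdd hσ measurable_const (C := |A|) (fun _ => le_rfl)
  -- facts for monotone bounded v
  have mono1 : ∀ v : ℝ → ℝ, Monotone v → Monotone (fun τ => P (v τ)) := fun v hv => hPm.comp hv
  have bd1 : ∀ v : ℝ → ℝ, (∀ τ, 0 ≤ v τ) → (∀ τ, v τ ≤ δ) → ∀ τ, |P (v τ)| ≤ P δ := by
    intro v h0 h1 τ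
    rw [abs_of_nonneg]
    · exact hPm (h1 τ)
    · rw [← hP0]; exact hPm (h0 τ)
  have ok1 : ∀ v ∈ S, relOk σ (fun τ => P (v τ)) := fun v hv =>
    relOk_of_bdd hσ (mono1 v hv.1).measurable (bd1 v hv.2.1 hv.2.2.1)
  have mono2 : ∀ v ∈ S, Monotone (relT σ (fun τ => P (v τ))) := fun v hv =>
    relT_monotone (ok1 v hv) (mono1 v hv.1)
  have bd2 : ∀ v ∈ S, ∀ τ, |relT σ (fun τ => P (v τ)) τ| ≤ P δ / σ := fun v hv =>
    relT_bdd hσ (mono1 v hv.1).measurable (bd1 v hv.2.1 hv.2.2.1)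
  have ok2 : ∀ v ∈ S, relOk σ (relT σ (fun τ => P (v τ))) := fun v hv =>
    relOk_of_bdd hσ (mono2 v hv).measurable (bd2 v hv)
  have Φmono : ∀ v ∈ S, ∀ v' ∈ S, (∀ τ, v τ ≤ v' τ) → ∀ τ, Φ v τ ≤ Φ v' τ := by
    intro v hv v' hv' h
    exact relT_mono (ok2 v hv) (ok2 v' hv') (relT_mono (ok1 v hv) (ok1 v' hv') fun τ => hPm (h τ))
  have u0 : ∀ v ∈ S, ∀ τ, 0 ≤ relT σ (fun τ => P (v τ)) τ := by
    intro v hv τ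
    have := relT_mono (hc 0) (ok1 v hv) (fun x => by rw [← hP0]; exact hPm (hv.2.1 x)) τ
    rwa [relT_const hσ, zero_div] at this
  have ΦS : ∀ v ∈ S, Φ v ∈ S := by
    intro v hv
    refine ⟨relT_monotone (ok2 v hv) (mono2 v hv), ?_, ?_, ?_, ?_⟩
    · intro τ
      have := relT_mono (hc 0) (ok2 v hv) (u0 v hv) τ
      rwa [relT_const hσ, zero_div] at this
    · intro τ
      have := relT_mono (ok2 v hv) (hc (P δ / σ)) (fun x => (abs_le.1 (bd2 v hv x)).2) τ
      rw [relT_const hσ, hPδ] at this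
      have e : σ ^ 2 * δ / σ / σ = δ := by field_simp
      rwa [e] at this
    · have hk : 0 < σ + κ := by linarith
      have h1 : ∀ x, relT σ (fun τ => P (v τ)) x ≤ μ ^ 2 / (σ + κ) * Real.exp (κ * x) := by
        intro x
        rw [← relT_exp hk]
        exact relT_mono (ok1 v hv) (relOk_exp hk _) (fun y => (hPu _ (hv.2.1 y)).trans
          (mul_le_mul_of_nonneg_left (hv.2.2.2.1 y) (sq_nonneg μ))) x
      intro τ
      have := relT_mono (ok2 v hv) (relOk_exp hk _) h1 τ
      rw [relT_exp hk] at this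
      have e : μ ^ 2 / (σ + κ) / (σ + κ) = 1 := by
        rw [show σ + κ = μ by linarith]; have : μ ≠ 0 := by linarith
        field_simp
      rwa [e, one_mul] at this
    · have hk : 0 < σ + κ := by linarith
      have hk2 : 0 < σ + 2 * κ := by linarith
      have h0 : ∀ x, μ ^ 2 * Real.exp (κ * x) - (μ ^ 2 * M + B) * Real.exp (2 * κ * x) ≤ P (v x) := by
        intro x
        have e2 : Real.exp (2 * κ * x) = Real.exp (κ * x) ^ 2 := by
          rw [← Real.exp_nat_mul]; congr 1; push_cast; ring
        have a1 := hPl _ (hv.2.1 x)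
        have a2 := hv.2.2.2.2 x
        have a3 := hv.2.2.2.1 x
        have a4 := hv.2.1 x
        have a5 : v x ^ 2 ≤ Real.exp (κ * x) ^ 2 := by gcongr
        rw [e2] at a2 ⊢
        have a6 := mul_le_mul_of_nonneg_left a2 (sq_nonneg μ)
        have a7 := mul_le_mul_of_nonneg_left a5 hB.le
        linarith
      have okA : ∀ A, relOk σ (fun x => A * Real.exp (κ * x)) := fun A => relOk_exp hk A
      have okB : ∀ A, relOk σ (fun x => A * Real.exp (2 * κ * x)) := fun A => relOk_exp hk2 A
      have h1 : ∀ x, μ ^ 2 / (σ + κ) * Real.exp (κ * x) - 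
          (μ ^ 2 * M + B) / (σ + 2 * κ) * Real.exp (2 * κ * x) ≤ relT σ (fun τ => P (v τ)) x := by
        intro x
        rw [← relT_exp hk, ← relT_exp hk2, ← relT_sub (okA _) (okB _)]
        exact relT_mono (relOk_sub (okA _) (okB _)) (ok1 v hv) h0 x
      intro τ
      have := relT_mono (relOk_sub (okA _) (okB _)) (ok2 v hv) h1 τ
      rw [relT_sub (okA _) (okB _), relT_exp hk, relT_exp hk2] at this
      have e : μ ^ 2 / (σ + κ) / (σ + κ) = 1 := by
        rw [show σ + κ = μ by linarith]; have : μ ≠ 0 := by linarith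
        field_simp
      have e' : (μ ^ 2 * M + B) / (σ + 2 * κ) / (σ + 2 * κ) ≤ M := by
        rw [div_div, div_le_iff₀ (by positivity)]; nlinarith
      rw [e, one_mul] at this
      have := mul_le_mul_of_nonneg_right e' (Real.exp_pos (2 * κ * τ)).le
      show _ ≤ relT σ (relT σ (fun τ => P (v τ))) τ
      linarith
  -- Knaster-Tarski
  let Q : Set (ℝ → ℝ) := {v | v ∈ S ∧ ∀ τ, Φ v τ ≤ v τ}
  obtain ⟨v0, hv0⟩ : ∃ v0, v0 ∈ Q := by
    have hS : (fun τ => min δ (Real.exp (κ * τ))) ∈ S := by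
      refine ⟨?_, ?_, ?_, ?_, ?_⟩
      · intro x y hxy
        exact min_le_min le_rfl (Real.exp_le_exp.2 (by nlinarith))
      · intro τ; positivity
      · intro τ; exact min_le_left _ _
      · intro τ; exact min_le_right _ _
      · intro τ
        have hx := Real.exp_pos (κ * τ)
        have e2 : Real.exp (2 * κ * τ) = Real.exp (κ * τ) ^ 2 := by
          rw [← Real.exp_nat_mul]; congr 1; push_cast; ring
        rw [e2]
        show _ ≤ min δ (Real.exp (κ * τ))
        generalize Real.exp (κ * τ) = x at hx
        refine le_min ?_ ?_
        · by_contra hcon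
          push Not at hcon
          nlinarith [sq_nonneg (M * x - 1 / 2), mul_lt_mul_of_pos_left hcon hM0]
        · nlinarith [mul_nonneg hM0.le (sq_nonneg x)]
    refine ⟨_, hS, fun τ => le_min ((ΦS _ hS).2.2.1 τ) ((ΦS _ hS).2.2.2.1 τ)⟩
  let w : ℝ → ℝ := fun τ => sInf ((fun v : ℝ → ℝ => v τ) '' Q)
  have wle : ∀ v ∈ Q, ∀ τ, w τ ≤ v τ := by
    intro v hv τ
    refine csInf_le ⟨0, ?_⟩ ⟨v, hv, rfl⟩
    rintro _ ⟨v', hv', rfl⟩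
    exact hv'.1.2.1 τ
  have lew : ∀ (b τ : ℝ), (∀ v ∈ Q, b ≤ v τ) → b ≤ w τ := by
    intro b τ h
    refine le_csInf ⟨_, v0, hv0, rfl⟩ ?_
    rintro _ ⟨v', hv', rfl⟩
    exact h v' hv'
  have wS : w ∈ S := by
    refine ⟨?_, ?_, ?_, ?_, ?_⟩
    · intro x y hxy
      exact lew _ _ fun v hv => (wle v hv x).trans (hv.1.1 hxy)
    · intro τ; exact lew _ _ fun v hv => hv.1.2.1 τ
    · intro τ; exact (wle _ hv0 τ).trans (hv0.1.2.2.1 τ)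
    · intro τ; exact (wle _ hv0 τ).trans (hv0.1.2.2.2.1 τ)
    · intro τ; exact lew _ _ fun v hv => hv.1.2.2.2.2 τ
  have h1 : ∀ τ, Φ w τ ≤ w τ := fun τ =>
    lew _ _ fun v hv => (Φmono w wS v hv.1 (wle v hv) τ).trans (hv.2 τ)
  have h2 : ∀ τ, w τ ≤ Φ w τ := 
    wle _ ⟨ΦS w wS, Φmono _ (ΦS w wS) _ wS h1⟩
  have hfix : Φ w = w := funext fun τ => le_antisymm (h1 τ) (h2 τ)
  clear_value w
  obtain ⟨u, hu⟩ : ∃ u, u = relT σ (fun τ => P (w τ)) := ⟨_, rfl⟩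
  have hw : relT σ u = w := by rw [hu]; exact hfix
  have ucont : Continuous u := by
    rw [hu]; exact relT_continuous hσ (mono1 w wS.1).measurable (bd1 w wS.2.1 wS.2.2.1)
  have ubd : ∀ τ, |u τ| ≤ P δ / σ := by rw [hu]; exact bd2 w wS
  have wd : ∀ τ, HasDerivAt w (-σ * w τ + u τ) τ := by
    intro τ
    have := relT_hasDerivAt hσ ucont ubd τ
    rwa [hw] at this
  have wcont : Continuous w := continuous_iff_continuousAt.2 fun τ => (wd τ).continuousAt
  have ud : ∀ τ, HasDerivAt u (-σ * u τ + P (w τ)) τ := by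
    intro τ
    have := relT_hasDerivAt hσ (hPc.comp wcont) (bd1 w wS.2.1 wS.2.2.1) τ
    rw [show relT σ (P ∘ w) = u from hu.symm] at this
    exact this
  have tb : Tendsto w atBot (𝓝 0) := by
    refine tendsto_of_tendsto_of_tendsto_of_le_of_le tendsto_const_nhds ?_ wS.2.1 wS.2.2.2.1
    exact Real.tendsto_exp_atBot.comp (tendsto_id.const_mul_atBot hκ0)
  obtain ⟨L, hL⟩ : ∃ L, Tendsto w atTop (𝓝 L) := by
    refine ⟨_, tendsto_atTop_ciSup wS.1 ⟨δ, ?_⟩⟩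
    rintro _ ⟨τ, rfl⟩; exact wS.2.2.1 τ
  have hLw : ∀ τ, w τ ≤ L := fun τ => wS.1.ge_of_tendsto hL τ
  have hLδ : L ≤ δ := le_of_tendsto' hL wS.2.2.1
  have hL0 : 0 < L := by
    obtain ⟨τ, hτ⟩ : ∃ τ, M * Real.exp (κ * τ) = 1 / 2 := by
      refine ⟨Real.log (1 / (2 * M)) / κ, ?_⟩
      rw [mul_div_cancel₀ _ hκ0.ne', Real.exp_log (by positivity)]; field_simp
    refine lt_of_lt_of_le ?_ ((wS.2.2.2.2 τ).trans (hLw τ))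
    have hx := Real.exp_pos (κ * τ)
    have e2 : Real.exp (2 * κ * τ) = Real.exp (κ * τ) ^ 2 := by
      rw [← Real.exp_nat_mul]; congr 1; push_cast; ring
    rw [e2]
    nlinarith
  have ut : Tendsto u atTop (𝓝 (P L / σ)) := by
    rw [hu]
    refine relT_tendsto hσ (mono1 w wS.1).measurable (bd1 w wS.2.1 wS.2.2.1) fun t => ?_
    exact (hPc.tendsto L).comp (hL.comp (tendsto_atTop_add_const_right _ (-t) tendsto_id))
  have ub : Tendsto u atBot (𝓝 (P 0 / σ)) := by
    rw [hu]
    refine relT_tendsto hσ (mono1 w wS.1).measurable (bd1 w wS.2.1 wS.2.2.1) fun t => ?_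
    exact (hPc.tendsto 0).comp (tb.comp (tendsto_atBot_add_const_right _ (-t) tendsto_id))
  have wt : Tendsto w atTop (𝓝 (P L / σ / σ)) := by
    rw [← hw]
    refine relT_tendsto hσ ucont.measurable ubd fun t => ?_
    exact ut.comp (tendsto_atTop_add_const_right _ (-t) tendsto_id)
  have hLe : L = P L / σ / σ := tendsto_nhds_unique hL wt
  have hLδ' : L = δ := by
    by_contra hne
    refine hPn L hL0 (lt_of_le_of_ne hLδ hne) ?_
    rw [div_div, eq_div_iff (by positivity)] at hLe
    linarith
  subst hLδ'
  refine ⟨w, u, wd, ud, wS.2.1, wS.2.2.1, tb, hL, ?_, ?_, _, ubd⟩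
  · rwa [hP0, zero_div] at ub
  · rw [hPδ] at ut
    rwa [show σ ^ 2 * L / σ = σ * L by field_simp] at ut

lemma rel_hasDerivAt_rpow (q : ℝ) {v : ℝ} (hv : 0 < v) :
    HasDerivAt (fun x : ℝ => x ^ q) (q * v ^ (q - 1)) v :=
  Real.hasDerivAt_rpow_const (Or.inl hv.ne')

lemma rel_convex {q : ℝ} (hq : q < 0) : StrictConvexOn ℝ (Set.Ioi (0:ℝ)) (fun x : ℝ => x ^ q) := by
  refine StrictMonoOn.strictConvexOn_of_deriv (convex_Ioi 0) ?_ ?_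
  · exact fun x hx => (rel_hasDerivAt_rpow q hx).continuousAt.continuousWithinAt
  · rw [interior_Ioi]
    intro x hx y hy hxy
    rw [(rel_hasDerivAt_rpow q hx).deriv, (rel_hasDerivAt_rpow q hy).deriv]
    have := Real.rpow_lt_rpow_of_neg hx hxy (show q - 1 < 0 by linarith)
    nlinarith

lemma rel_tangent {q x y : ℝ} (hq : q < 0) (hx : 0 < x) (hxy : x ≤ y) :
    x ^ q + q * x ^ (q - 1) * (y - x) ≤ y ^ q := by
  rcases hxy.eq_or_lt with rfl | h
  · simp
  have := (rel_convex hq).convexOn.le_slope_of_hasDerivAt (x := x) (y := y) hx (hx.trans h) h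
    (rel_hasDerivAt_rpow q hx)
  rw [slope_def_field, le_div_iff₀ (by linarith)] at this
  linarith

lemma rel_quad {γ x w : ℝ} (hγ : 1 < γ) (hx : 0 < x) (hw : 0 ≤ w) :
    γ * x ^ (-γ - 1) * w - γ * (γ + 1) * x ^ (-γ - 2) * w ^ 2 ≤ x ^ (-γ) - (x + w) ^ (-γ) := by
  -- tangent from the other endpoint
  have h1 : MonotoneOn (fun w : ℝ => x ^ (-γ) - (x + w) ^ (-γ) - γ * x ^ (-γ - 1) * w
      + γ * (γ + 1) * x ^ (-γ - 2) * w ^ 2) (Set.Ici 0) := by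
    have hd : ∀ w, 0 ≤ w → HasDerivAt (fun w : ℝ => x ^ (-γ) - (x + w) ^ (-γ) - γ * x ^ (-γ - 1) * w
      + γ * (γ + 1) * x ^ (-γ - 2) * w ^ 2) (0 - (-γ * (x + w) ^ (-γ - 1)) * 1 - γ * x ^ (-γ - 1) * 1
      + γ * (γ + 1) * x ^ (-γ - 2) * (2 * w)) w := by
      intro w hw
      have a : HasDerivAt (fun w : ℝ => (x + w) ^ (-γ)) ((-γ * (x + w) ^ (-γ - 1)) * 1) w :=
        (rel_hasDerivAt_rpow (-γ) (v := x + w) (by linarith)).comp w ((hasDerivAt_id w).const_add x)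
      have b : HasDerivAt (fun w : ℝ => w ^ 2) (2 * w) w := by simpa using hasDerivAt_pow 2 w
      exact (((hasDerivAt_const w _).sub a).sub ((hasDerivAt_id w).const_mul _)).add (b.const_mul _)
    refine monotoneOn_of_deriv_nonneg (convex_Ici 0)
      (fun w hw => (hd w hw).continuousAt.continuousWithinAt) ?_ ?_
    · intro w hw; rw [interior_Ici] at hw
      exact (hd w (le_of_lt hw)).differentiableAt.differentiableWithinAt
    · intro w hw; rw [interior_Ici] at hw
      rw [(hd w (le_of_lt hw)).deriv]
      have hw' : 0 < w := hw
      have t := rel_tangent (q := -γ - 1) (x := x) (y := x + w) (by linarith) hx (by linarith)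
      rw [show -γ - 1 - 1 = -γ - 2 by ring] at t
      have t' := mul_le_mul_of_nonneg_left t (show 0 ≤ γ by linarith)
      have : 0 ≤ γ * (γ + 1) * x ^ (-γ - 2) * w := by positivity
      nlinarith
  have := h1 (Set.mem_Ici.2 le_rfl) (Set.mem_Ici.2 hw) hw
  simp at this
  linarith

lemma rel_first_integral {γ a s : ℝ} {Ul Ur : ℝ × ℝ} {U : ℝ → ℝ × ℝ} (hl : 0 < Ul.1)
    (h : IsProfile γ a s Ul Ur U) (ξ : ℝ) :
    (a ^ 2 - s ^ 2) • deriv U ξ = (-s) • (U ξ - Ul) + (Fl γ (U ξ) - Fl γ Ul) := by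
  obtain ⟨hC, hpos, -, heq, hb, -, hdb, -⟩ := h
  have dU : Differentiable ℝ U := hC.differentiable (by norm_num)
  have dU' : Differentiable ℝ (deriv U) := by
    have : ContDiff ℝ 1 (deriv U) := by
      have := (contDiff_succ_iff_deriv (n := 1)).1 (by rw [one_add_one_eq_two]; exact hC)
      exact this.2.2
    exact this.differentiable (by norm_num)
  have dF : ∀ V : ℝ × ℝ, 0 < V.1 → DifferentiableAt ℝ (Fl γ) V := by
    intro V hV
    unfold Fl pP
    exact (differentiableAt_snd.neg).prodMk (differentiableAt_fst.rpow_const (Or.inl hV.ne'))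
  have dFU : Differentiable ℝ (Fl γ ∘ U) := fun x => (dF _ (hpos x)).comp x (dU x)
  let G : ℝ → ℝ × ℝ := fun ξ => (a ^ 2 - s ^ 2) • deriv U ξ - ((-s) • U ξ + (Fl γ ∘ U) ξ)
  have hG : ∀ x, HasDerivAt G 0 x := by
    intro x
    have := ((dU' x).hasDerivAt.const_smul (a ^ 2 - s ^ 2)).sub
      (((dU x).hasDerivAt.const_smul (-s)).add (dFU x).hasDerivAt)
    rw [heq x, sub_self] at this
    exact this
  have hconst : ∀ x, G x = G ξ := fun x =>
    is_const_of_deriv_eq_zero (fun x => (hG x).differentiableAt) (fun x => (hG x).deriv) x ξ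
  have hlim : Tendsto G atBot (𝓝 ((a ^ 2 - s ^ 2) • (0 : ℝ × ℝ) - ((-s) • Ul + Fl γ Ul))) :=
    (hdb.const_smul _).sub ((hb.const_smul _).add ((dF _ hl).continuousAt.tendsto.comp hb))
  have e : G ξ = (a ^ 2 - s ^ 2) • (0 : ℝ × ℝ) - ((-s) • Ul + Fl γ Ul) := by
    refine tendsto_nhds_unique ?_ hlim
    rw [show G = fun _ => G ξ from funext hconst]
    exact tendsto_const_nhds
  have e2 : (a ^ 2 - s ^ 2) • deriv U ξ = G ξ + ((-s) • U ξ + Fl γ (U ξ)) := by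
    simp [G]
  rw [e2, e, smul_sub]
  simp only [smul_zero]; abel

/-- the basic comparison step -/
lemma rel_contact {σ c : ℝ} (hσ : 0 < σ) (hc : 0 < c) {d e q : ℝ → ℝ}
    (hd : ∀ x, HasDerivAt d ((σ * d x - e x) / c) x)
    (he : ∀ x, HasDerivAt e ((σ * e x + q x) / c) x)
    (hq : ∀ x, d x * q x ≤ 0) {C : ℝ} (hC : ∀ x, |d x| ≤ C) {x₀ : ℝ} (h0 : d x₀ = 0) :
    ∃ x₁, d x₁ = 0 ∧ e x₁ = 0 := by
  let X : ℝ → ℝ := fun x => Real.exp (-(2 * σ / c) * x)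
  have hX : ∀ x, HasDerivAt X (X x * (-(2 * σ / c) * 1)) x := fun x =>
    ((hasDerivAt_id x).const_mul (-(2 * σ / c))).exp
  have hXp : ∀ x, 0 < X x := fun x => Real.exp_pos _
  have hN : ∀ x, HasDerivAt (fun x => X x * (d x * e x)) (X x * ((d x * q x - e x ^ 2) / c)) x := by
    intro x
    refine ((hX x).mul ((hd x).mul (he x))).congr_deriv ?_
    simp only [Pi.mul_apply]; field_simp; ring
  have hNa : Antitone (fun x => X x * (d x * e x)) :=
    antitone_of_deriv_nonpos (fun x => (hN x).differentiableAt) fun x => by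
      rw [(hN x).deriv]
      refine mul_nonpos_of_nonneg_of_nonpos (hXp x).le (div_nonpos_of_nonpos_of_nonneg ?_ hc.le)
      nlinarith [hq x, sq_nonneg (e x)]
  have hNn : ∀ x, x₀ ≤ x → d x * e x ≤ 0 := by
    intro x hx
    have := hNa hx
    simp only [h0, zero_mul, mul_zero] at this
    by_contra hcon
    push Not at hcon
    exact absurd (mul_pos (hXp x) hcon) (not_lt.2 this)
  have hD : ∀ x, HasDerivAt (fun x => X x * (d x * d x)) (X x * (-2 * (d x * e x) / c)) x := by
    intro x
    refine ((hX x).mul ((hd x).mul (hd x))).congr_deriv ?_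
    simp only [Pi.mul_apply]; field_simp; ring
  have hDm : MonotoneOn (fun x => X x * (d x * d x)) (Set.Ici x₀) := by
    refine monotoneOn_of_deriv_nonneg (convex_Ici x₀)
      (fun x _ => (hD x).continuousAt.continuousWithinAt)
      (fun x _ => (hD x).differentiableAt.differentiableWithinAt) ?_
    intro x hx; rw [interior_Ici] at hx
    rw [(hD x).deriv]
    have := hNn x (le_of_lt hx)
    exact mul_nonneg (hXp x).le (div_nonneg (by linarith) hc.le)
  have hlim : Tendsto (fun x => X x * (d x * d x)) atTop (𝓝 0) := by
    have h1 : Tendsto (fun x => X x * (C * C)) atTop (𝓝 (0 * (C * C))) := by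
      refine Tendsto.mul_const _ (Real.tendsto_exp_atBot.comp ?_)
      exact tendsto_id.const_mul_atTop_of_neg (by have : 0 < 2 * σ / c := by positivity
                                                  linarith)
    rw [zero_mul] at h1
    refine tendsto_of_tendsto_of_tendsto_of_le_of_le tendsto_const_nhds h1 ?_ ?_
    · intro x; exact mul_nonneg (hXp x).le (mul_self_nonneg _)
    · intro x
      refine mul_le_mul_of_nonneg_left ?_ (hXp x).le
      rw [← abs_mul_abs_self]
      exact mul_self_le_mul_self (abs_nonneg _) (hC x)
  have hz : ∀ x, x₀ ≤ x → d x = 0 := by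
    intro x hx
    have h1 : X x * (d x * d x) ≤ 0 := by
      refine ge_of_tendsto hlim ?_
      filter_upwards [eventually_ge_atTop x] with y hy
      exact hDm hx (hx.trans hy) hy
    by_contra hne
    exact absurd (mul_pos (hXp x) (mul_self_pos.2 hne)) (not_lt.2 h1)
  refine ⟨x₀ + 1, hz _ (by linarith), ?_⟩
  have h1 : HasDerivAt d 0 (x₀ + 1) := by
    refine (hasDerivAt_const (x₀ + 1) (0:ℝ)).congr_of_eventuallyEq ?_
    filter_upwards [eventually_ge_nhds (show x₀ < x₀ + 1 by linarith)] with y hy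
    exact hz y hy
  have h2 := (hd (x₀ + 1)).unique h1
  rw [hz _ (by linarith)] at h2
  field_simp at h2
  linarith

noncomputable def relG (γ c s : ℝ) (Ul : ℝ × ℝ) (U : ℝ × ℝ) : ℝ × ℝ :=
  c⁻¹ • ((-s) • (U - Ul) + (Fl γ U - Fl γ Ul))

lemma Fl_contDiffAt (γ : ℝ) {V : ℝ × ℝ} (hV : 0 < V.1) : ContDiffAt ℝ 2 (Fl γ) V := by
  unfold Fl pP
  exact (contDiffAt_snd.neg).prodMk (contDiffAt_fst.rpow_const_of_ne hV.ne')

lemma relG_contDiffAt (γ c s : ℝ) (Ul : ℝ × ℝ) {V : ℝ × ℝ} (hV : 0 < V.1) :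
    ContDiffAt ℝ 2 (relG γ c s Ul) V := by
  unfold relG
  have := Fl_contDiffAt γ hV
  fun_prop

lemma rel_hasDerivAt {γ a s : ℝ} {Ul Ur : ℝ × ℝ} {U : ℝ → ℝ × ℝ} (hl : 0 < Ul.1)
    (hc : 0 < a ^ 2 - s ^ 2) (h : IsProfile γ a s Ul Ur U) (ξ : ℝ) :
    HasDerivAt U (relG γ (a ^ 2 - s ^ 2) s Ul (U ξ)) ξ := by
  have h1 : DifferentiableAt ℝ U ξ := h.1.differentiable (by norm_num) ξ
  have := rel_first_integral hl h ξ
  unfold relG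
  rw [← this, smul_smul, inv_mul_cancel₀ hc.ne', one_smul]
  exact h1.hasDerivAt

lemma rel_ode_unique {γ c s : ℝ} {Ul : ℝ × ℝ} {U V : ℝ → ℝ × ℝ}
    (hU : ∀ x, HasDerivAt U (relG γ c s Ul (U x)) x) (hV : ∀ x, HasDerivAt V (relG γ c s Ul (V x)) x)
    (hU0 : ∀ x, 0 < (U x).1) (hV0 : ∀ x, 0 < (V x).1) {x₀ : ℝ} (h0 : U x₀ = V x₀) : U = V := by
  ext1 x
  obtain ⟨A, B, hx, hx0⟩ : ∃ A B, x ∈ Set.Ioo A B ∧ x₀ ∈ Set.Ioo A B := by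
    refine ⟨min x x₀ - 1, max x x₀ + 1, ?_, ?_⟩ <;> constructor <;> 
    linarith [min_le_left x x₀, min_le_right x x₀, le_max_left x x₀, le_max_right x x₀]
  have cU : Continuous U := continuous_iff_continuousAt.2 fun x => (hU x).continuousAt
  have cV : Continuous V := continuous_iff_continuousAt.2 fun x => (hV x).continuousAt
  obtain ⟨S, hSdef⟩ : ∃ S, S = U '' Set.Icc A B ∪ V '' Set.Icc A B := ⟨_, rfl⟩
  have hS : IsCompact S := by
    rw [hSdef]; exact (isCompact_Icc.image cU).union (isCompact_Icc.image cV)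
  have hSU : ∀ t ∈ Set.Ioo A B, U t ∈ S := fun t ht => by
    rw [hSdef]; exact Or.inl ⟨t, Set.Ioo_subset_Icc_self ht, rfl⟩
  have hSV : ∀ t ∈ Set.Ioo A B, V t ∈ S := fun t ht => by
    rw [hSdef]; exact Or.inr ⟨t, Set.Ioo_subset_Icc_self ht, rfl⟩
  have hSp : ∀ p ∈ S, 0 < p.1 := by
    rw [hSdef]
    rintro _ (⟨y, _, rfl⟩ | ⟨y, _, rfl⟩)
    · exact hU0 y
    · exact hV0 y
  obtain ⟨m, hm, hmin⟩ := hS.exists_isMinOn ⟨_, hSU x hx⟩ continuous_fst.continuousOn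
  obtain ⟨C, hC⟩ := hS.isBounded.exists_norm_le
  let K : Set (ℝ × ℝ) := Set.Icc (m.1, -C) (C, C)
  have hKc : IsCompact K := isCompact_Icc
  have hSK : ∀ p ∈ S, p ∈ K := fun p hp =>
    ⟨⟨hmin hp, (abs_le.1 ((norm_snd_le p).trans (hC p hp))).1⟩,
      ⟨(abs_le.1 ((norm_fst_le p).trans (hC p hp))).2, (abs_le.1 ((norm_snd_le p).trans (hC p hp))).2⟩⟩
  have hKp : K ⊆ {p : ℝ × ℝ | 0 < p.1} := fun p hp => (hSp m hm).trans_le hp.1.1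
  have hG : ContDiffOn ℝ 2 (relG γ c s Ul) K := fun p hp =>
    (relG_contDiffAt γ c s Ul (hKp hp)).contDiffWithinAt
  obtain ⟨k, hk⟩ := hG.exists_lipschitzOnWith (by norm_num) (convex_Icc _ _) hKc
  refine ODE_solution_unique_of_mem_Ioo (v := fun _ => relG γ c s Ul) (s := fun _ => K) 
    (fun t _ => hk) hx0 (fun t ht => ⟨hU t, ?_⟩) (fun t ht => ⟨hV t, ?_⟩) h0 hx
  · exact hSK _ (hSU t ht)
  · exact hSK _ (hSV t ht)

lemma rel_hits {γ a s : ℝ} {Ul Ur : ℝ × ℝ} {U : ℝ → ℝ × ℝ} (hlt : Ur.1 < Ul.1)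
    (h : IsProfile γ a s Ul Ur U) : ∃ x, (U x).1 = (Ul.1 + Ur.1) / 2 := by
  obtain ⟨hC, -, -, -, hb, ht, -, -⟩ := h
  have c : Continuous (fun x => (U x).1) := continuous_fst.comp hC.continuous
  have tb : Tendsto (fun x => (U x).1) atBot (𝓝 Ul.1) := (continuous_fst.tendsto _).comp hb
  have tt : Tendsto (fun x => (U x).1) atTop (𝓝 Ur.1) := (continuous_fst.tendsto _).comp ht
  obtain ⟨x, hx⟩ := (tb.eventually (lt_mem_nhds (show (Ul.1 + Ur.1) / 2 < Ul.1 by linarith))).exists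
  obtain ⟨y, hy⟩ := (tt.eventually (gt_mem_nhds (show Ur.1 < (Ul.1 + Ur.1) / 2 by linarith))).exists
  exact mem_range_of_exists_le_of_exists_ge c ⟨y, hy.le⟩ ⟨x, hx.le⟩

lemma rel_fst {U : ℝ → ℝ × ℝ} {U' : ℝ × ℝ} {x : ℝ} (h : HasDerivAt U U' x) :
    HasDerivAt (fun x => (U x).1) U'.1 x :=
  (ContinuousLinearMap.fst ℝ ℝ ℝ).hasFDerivAt.comp_hasDerivAt x h

lemma rel_snd {U : ℝ → ℝ × ℝ} {U' : ℝ × ℝ} {x : ℝ} (h : HasDerivAt U U' x) :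
    HasDerivAt (fun x => (U x).2) U'.2 x :=
  (ContinuousLinearMap.snd ℝ ℝ ℝ).hasFDerivAt.comp_hasDerivAt x h

lemma rel_unique {γ a s : ℝ} (hγ : 1 < γ) (hs : s < 0) {Ul Ur : ℝ × ℝ} (hl : 0 < Ul.1)
    (hc : 0 < a ^ 2 - s ^ 2) (hlt : Ur.1 < Ul.1)
    {U V : ℝ → ℝ × ℝ} (hU : IsProfile γ a s Ul Ur U) (hV : IsProfile γ a s Ul Ur V) :
    ∃ h : ℝ, ∀ ξ, V ξ = U (ξ + h) := by
  obtain ⟨x, hx⟩ := rel_hits hlt hU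
  obtain ⟨y, hy⟩ := rel_hits hlt hV
  refine ⟨x - y, ?_⟩
  obtain ⟨Z, hZ⟩ : ∃ Z : ℝ → ℝ × ℝ, Z = fun ξ => U (ξ + (x - y)) := ⟨_, rfl⟩
  have dZ : ∀ ξ, HasDerivAt Z (relG γ (a ^ 2 - s ^ 2) s Ul (Z ξ)) ξ := by
    intro ξ; rw [hZ]; exact (rel_hasDerivAt hl hc hU (ξ + (x - y))).comp_add_const ξ (x - y)
  have dV := rel_hasDerivAt hl hc hV
  have Z0 : ∀ ξ, 0 < (Z ξ).1 := by intro ξ; rw [hZ]; exact hU.2.1 _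
  obtain ⟨C1, hC1⟩ := hU.2.2.1.exists_norm_le
  obtain ⟨C2, hC2⟩ := hV.2.2.1.exists_norm_le
  have bZ : ∀ ξ, |(Z ξ).1| ≤ C1 := by 
    intro ξ; rw [hZ]; exact (norm_fst_le _).trans (hC1 _ ⟨_, rfl⟩)
  have bV : ∀ ξ, |(V ξ).1| ≤ C2 := by 
    intro ξ; exact (norm_fst_le _).trans (hC2 _ ⟨_, rfl⟩)
  have key := rel_contact (σ := -s) (c := a ^ 2 - s ^ 2) (by linarith) hc
    (d := fun ξ => (Z ξ).1 - (V ξ).1) (e := fun ξ => (Z ξ).2 - (V ξ).2)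
    (q := fun ξ => pP γ (Z ξ).1 - pP γ (V ξ).1) ?_ ?_ ?_ (C := C1 + C2) ?_ (x₀ := y) ?_
  · obtain ⟨x₁, h1, h2⟩ := key
    have e : V x₁ = Z x₁ := by
      refine Prod.ext ?_ ?_ <;> linarith
    have := rel_ode_unique dV dZ hV.2.1 Z0 e
    intro ξ; rw [this, hZ]
  · intro ξ
    have := (rel_fst (dZ ξ)).sub (rel_fst (dV ξ))
    refine this.congr_deriv ?_
    simp [relG, Fl]; field_simp; ring
  · intro ξ
    have := (rel_snd (dZ ξ)).sub (rel_snd (dV ξ))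
    refine this.congr_deriv ?_
    simp [relG, Fl]; field_simp; ring
  · intro ξ
    simp only [pP]
    have a := Z0 ξ
    have b := hV.2.1 ξ
    rcases le_total (Z ξ).1 (V ξ).1 with h | h
    · have := Real.rpow_le_rpow_of_nonpos a h (show -γ ≤ 0 by linarith)
      exact mul_nonpos_of_nonpos_of_nonneg (by linarith) (by linarith)
    · have := Real.rpow_le_rpow_of_nonpos b h (show -γ ≤ 0 by linarith)
      exact mul_nonpos_of_nonneg_of_nonpos (by linarith) (by linarith)
  · intro ξ
    exact (abs_sub _ _).trans (add_le_add (bZ ξ) (bV ξ))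
  · simp [hZ, hx, hy]

lemma rel_profile_of_ode {γ a s : ℝ} {Ul Ur : ℝ × ℝ} (hc : 0 < a ^ 2 - s ^ 2) {U : ℝ → ℝ × ℝ}
    (hl : 0 < Ul.1) (hr : 0 < Ur.1) (hRH : (-s) • (Ur - Ul) + (Fl γ Ur - Fl γ Ul) = 0)
    (hU : ∀ x, HasDerivAt U (relG γ (a ^ 2 - s ^ 2) s Ul (U x)) x) (hU0 : ∀ x, 0 < (U x).1)
    (hb : Bornology.IsBounded (Set.range U)) (h1 : Tendsto U atBot (𝓝 Ul))
    (h2 : Tendsto U atTop (𝓝 Ur)) : IsProfile γ a s Ul Ur U := by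
  have dU : Differentiable ℝ U := fun x => (hU x).differentiableAt
  have hd : deriv U = fun x => relG γ (a ^ 2 - s ^ 2) s Ul (U x) := funext fun x => (hU x).deriv
  have c1 : ContDiff ℝ 1 U := by
    rw [contDiff_one_iff_deriv]
    refine ⟨dU, ?_⟩
    rw [hd]
    exact continuous_iff_continuousAt.2 fun x =>
      ((relG_contDiffAt γ _ s Ul (hU0 x)).continuousAt).comp (dU x).continuousAt
  have c2 : ContDiff ℝ 2 U := by
    have : ContDiff ℝ (1 + 1) U := by
      rw [contDiff_succ_iff_deriv]
      refine ⟨dU, by simp, ?_⟩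
      rw [hd]
      exact contDiff_iff_contDiffAt.2 fun x =>
        ((relG_contDiffAt γ _ s Ul (hU0 x)).of_le (by norm_num)).comp x c1.contDiffAt
    simpa [one_add_one_eq_two] using this
  have dF : ∀ x, DifferentiableAt ℝ (Fl γ ∘ U) x := fun x =>
    ((Fl_contDiffAt γ (hU0 x)).differentiableAt (by norm_num)).comp x (dU x)
  have lim : ∀ (l : Filter ℝ) (L : ℝ × ℝ), 0 < L.1 → Tendsto U l (𝓝 L) →
      relG γ (a ^ 2 - s ^ 2) s Ul L = 0 → Tendsto (deriv U) l (𝓝 0) := by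
    intro l L hL h h0
    rw [hd, ← h0]
    exact (relG_contDiffAt γ _ s Ul hL).continuousAt.tendsto.comp h
  refine ⟨c2, hU0, hb, ?_, h1, h2, lim _ _ hl h1 (by simp [relG]), lim _ _ hr h2 ?_⟩
  · intro x
    have : HasDerivAt (deriv U) ((a ^ 2 - s ^ 2)⁻¹ • ((-s) • deriv U x + deriv (Fl γ ∘ U) x)) x := by
      rw [hd]
      have := ((((dU x).hasDerivAt.sub_const Ul).const_smul (-s)).add
        ((dF x).hasDerivAt.sub_const (Fl γ Ul))).const_smul (a ^ 2 - s ^ 2)⁻¹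
      rw [hd] at this
      exact this
    rw [this.deriv, smul_smul, mul_inv_cancel₀ hc.ne', one_smul]
  · rw [relG, hRH, smul_zero]

/-- existence and uniqueness-up-to-shift of the 1-relaxation shock profile. -/
theorem relaxation_shock_exists_unique_up_to_shift
    (γ a s₁ : ℝ) (hγ : 1 < γ) (ha : 0 < a)
    (vs us vp up : ℝ) (hvs : 0 < vs) (hvp : 0 < vp)
    (hRH1 : -s₁ * (vp - vs) - (up - us) = 0)
    (hRH2 : -s₁ * (up - us) + (pP γ vp - pP γ vs) = 0)
    (hLax1 : lam1 γ vp < s₁) (hLax2 : s₁ < lam1 γ vs) (hLax3 : lam1 γ vs < 0)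
    (hsub : ∀ v ∈ Set.uIcc vs vp, Real.sqrt (γ * v ^ (-γ - 1)) < a) :
    (∃ U : ℝ → ℝ × ℝ, IsProfile γ a s₁ (vs, us) (vp, up) U) ∧
    (∀ U Ubar : ℝ → ℝ × ℝ,
      IsProfile γ a s₁ (vs, us) (vp, up) U →
      IsProfile γ a s₁ (vs, us) (vp, up) Ubar →
      ∃ h : ℝ, ∀ ξ : ℝ, Ubar ξ = U (ξ + h)) := by
  have hγ0 : 0 < γ := by linarith
  have hs : s₁ < 0 := hLax2.trans hLax3
  have hppos : 0 < vp ^ (-γ - 1) := Real.rpow_pos_of_pos hvp _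
  have hspos : 0 < vs ^ (-γ - 1) := Real.rpow_pos_of_pos hvs _
  obtain ⟨μ, hμ⟩ : ∃ μ, μ = Real.sqrt (γ * vp ^ (-γ - 1)) := ⟨_, rfl⟩
  have hμ2 : μ ^ 2 = γ * vp ^ (-γ - 1) := by rw [hμ, Real.sq_sqrt (by positivity)]
  have hσμ : -s₁ < μ := by
    unfold lam1 at hLax1; rw [← hμ] at hLax1; linarith
  have hμa : μ < a := by rw [hμ]; exact hsub vp Set.right_mem_uIcc
  have hc : 0 < a ^ 2 - s₁ ^ 2 := by nlinarith
  have hlt : vp < vs := by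
    by_contra hcon
    push Not at hcon
    have h1 := Real.rpow_le_rpow_of_nonpos hvs hcon (show -γ - 1 ≤ 0 by linarith)
    have h2 : Real.sqrt (γ * vp ^ (-γ - 1)) ≤ Real.sqrt (γ * vs ^ (-γ - 1)) := by gcongr
    unfold lam1 at hLax1 hLax2
    linarith
  refine ⟨?_, fun U Ubar hU hUbar => rel_unique hγ hs (Ul := (vs, us)) hvs hc hlt hU hUbar⟩
  have hup : up = us - s₁ * (vp - vs) := by linarith
  have hRH : pP γ vp - pP γ vs = s₁ ^ 2 * (vs - vp) := by
    rw [hup] at hRH2; linarith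
  have hB : 0 < γ * (γ + 1) * vp ^ (-γ - 2) := by positivity
  obtain ⟨w, u, hw, hu, w0, wδ, wb, wt, ub, ut, C, hC⟩ :=
    rel_exist (σ := -s₁) (μ := μ) (δ := vs - vp) (B := γ * (γ + 1) * vp ^ (-γ - 2))
    (P := fun w => pP γ vp - pP γ (vp + max w 0)) (by linarith) hσμ (by linarith) hB
    (by
      intro x y hxy
      have h1 : vp + max x 0 ≤ vp + max y 0 := by gcongr
      have h2 : 0 < vp + max x 0 := by positivity
      have := Real.rpow_le_rpow_of_nonpos h2 h1 (show -γ ≤ 0 by linarith)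
      simp only [pP]; linarith)
    (by
      unfold pP
      refine continuous_const.sub (Continuous.rpow_const (by fun_prop) fun x => Or.inl ?_)
      have : 0 < vp + max x 0 := by positivity
      exact this.ne')
    (by simp)
    (by
      intro w hw
      simp only [max_eq_left hw, pP, hμ2]
      have := rel_tangent (q := -γ) (x := vp) (y := vp + w) (by linarith) hvp (by linarith)
      linarith)
    (by
      intro w hw
      simp only [max_eq_left hw, pP, hμ2]
      exact rel_quad hγ hvp hw)
    (by
      simp only [max_eq_left (show (0:ℝ) ≤ vs - vp by linarith)]
      rw [show vp + (vs - vp) = vs by ring, hRH]; ring)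
    (by
      intro w hw0 hw1
      simp only [max_eq_left hw0.le]
      have k1 : 0 < 1 - w / (vs - vp) := by
        rw [sub_pos, div_lt_one (by linarith)]; exact hw1
      have k2 : 0 < w / (vs - vp) := div_pos hw0 (by linarith)
      have h := (rel_convex (q := -γ) (by linarith)).2 (Set.mem_Ioi.2 hvp) (Set.mem_Ioi.2 hvs)
        hlt.ne k1 k2 (by ring)
      have hne : vs - vp ≠ 0 := by linarith
      simp only [smul_eq_mul] at h
      have e1 : (1 - w / (vs - vp)) * vp + w / (vs - vp) * vs = vp + w := by
        field_simp; ring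
      have e2 : (1 - w / (vs - vp)) * vp ^ (-γ) + w / (vs - vp) * vs ^ (-γ)
          = vp ^ (-γ) - s₁ ^ 2 * w := by
        unfold pP at hRH
        rw [show vs ^ (-γ) = vp ^ (-γ) - s₁ ^ 2 * (vs - vp) by linarith]
        field_simp; ring
      rw [e1, e2] at h
      unfold pP
      intro hcon
      nlinarith)
  obtain ⟨c, hcdef⟩ : ∃ c, c = a ^ 2 - s₁ ^ 2 := ⟨_, rfl⟩
  have hcp : 0 < c := by rw [hcdef]; exact hc
  have hg : ∀ ξ, HasDerivAt (fun ξ : ℝ => -c⁻¹ * ξ) (-c⁻¹) ξ := fun ξ => by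
    simpa using (hasDerivAt_id ξ).const_mul (-c⁻¹)
  have tb : Tendsto (fun ξ : ℝ => -c⁻¹ * ξ) atBot atTop :=
    tendsto_id.const_mul_atBot_of_neg (by have := inv_pos.2 hcp; linarith)
  have tt : Tendsto (fun ξ : ℝ => -c⁻¹ * ξ) atTop atBot :=
    tendsto_id.const_mul_atTop_of_neg (by have := inv_pos.2 hcp; linarith)
  refine ⟨fun ξ => (vp + w (-c⁻¹ * ξ), up + u (-c⁻¹ * ξ)), rel_profile_of_ode hc hvs hvp ?_ ?_ ?_ ?_ ?_ ?_⟩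
  · refine Prod.ext ?_ ?_
    · simp [Fl]; linarith
    · simp [Fl]; linarith
  · intro ξ
    have d1 := (hw (-c⁻¹ * ξ)).comp ξ (hg ξ)
    have d2 := (hu (-c⁻¹ * ξ)).comp ξ (hg ξ)
    refine ((d1.const_add vp).prodMk (d2.const_add up)).congr_deriv ?_
    rw [← hcdef]
    simp only [max_eq_left (w0 (-c⁻¹ * ξ))]
    refine Prod.ext ?_ ?_
    · simp [relG, Fl]
      field_simp
      rw [hup]; ring
    · simp [relG, Fl]
      field_simp
      have : pP γ vs = pP γ vp - s₁ ^ 2 * (vs - vp) := by linarith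
      rw [hup, this]; ring
  · intro ξ
    have := w0 (-c⁻¹ * ξ)
    show 0 < vp + w (-c⁻¹ * ξ)
    linarith
  · refine (isBounded_iff_forall_norm_le).2 ⟨max vs (|up| + C), ?_⟩
    rintro _ ⟨ξ, rfl⟩
    rw [Prod.norm_def]
    refine max_le_max ?_ ?_
    · have h1 := w0 (-c⁻¹ * ξ)
      have h2 := wδ (-c⁻¹ * ξ)
      rw [Real.norm_eq_abs, abs_of_nonneg] <;> simp only <;> linarith
    · exact (abs_add_le _ _).trans (by simpa using hC _)
  · refine Tendsto.prodMk_nhds ?_ ?_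
    · have := (wt.comp tb).const_add vp
      rwa [show vp + (vs - vp) = vs by ring] at this
    · have := (ut.comp tb).const_add up
      rwa [show up + -s₁ * (vs - vp) = us by rw [hup]; ring] at this
  · refine Tendsto.prodMk_nhds ?_ ?_
    · have := (wb.comp tt).const_add vp
      rwa [add_zero] at this
    · have := (ub.comp tt).const_add up
      rwa [add_zero] at this
end

section
/- There exist constants δ₀ > 0, C > 0 and c₀ > 0 (depending only on γ, a and a fixed base state) such that the following holds. Let U^{S₁} be an s₁-relaxation shock profile connecting U* (at −∞) and U₊ (at +∞) whose speed s₁ satisfies the Lax condition λ₁(v₊) < s₁ < λ₁(v*) < 0 and the sub-characteristic condition √(−p′(v)) < a on the interval between v* and v₊, normalized so that its first component satisfies V^{S₁}(0) = (v* + v₊)/2, and suppose the wave strength δ₁ = |U₊ − U*| satisfies δ₁ ≤ δ₀. Then |U^{S₁}(ξ) − U*| ≤ C δ₁ e^{−c₀ δ₁ |ξ|} for all ξ ≤ 0, and |U^{S₁}(ξ) − U₊| ≤ C δ₁ e^{−c₀ δ₁ |ξ|} for all ξ ≥ 0. -/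
open Real Filter Topology

lemma integ_nonneg (q q' : ℝ → ℝ) (ω L : ℝ) (hω : 0 < ω)
    (hq : ∀ ξ, HasDerivAt q (q' ξ) ξ) (h : ∀ ξ, q' ξ ≤ ω * q ξ)
    (lim : Tendsto q atTop (𝓝 L)) (ξ : ℝ) : 0 ≤ q ξ := by
  have hd : ∀ t, HasDerivAt (fun t => Real.exp (-(ω * t)) * q t)
      (Real.exp (-(ω * t)) * (-(ω * 1)) * q t + Real.exp (-(ω * t)) * q' t) t := fun t =>
    ((((hasDerivAt_id t).const_mul ω).neg).exp).mul (hq t)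
  have hanti : Antitone (fun t => Real.exp (-(ω * t)) * q t) := by
    apply antitone_of_hasDerivAt_nonpos hd
    intro t
    have := mul_le_mul_of_nonneg_left (h t) (Real.exp_pos (-(ω * t))).le
    show _ ≤ (0:ℝ)
    nlinarith
  have h0 : Tendsto (fun t => Real.exp (-(ω * t))) atTop (𝓝 0) := by
    apply Real.tendsto_exp_neg_atTop_nhds_zero.comp
    exact tendsto_id.const_mul_atTop hω
  have hl := h0.mul lim
  rw [zero_mul] at hl
  have := hanti.le_of_tendsto hl ξ
  exact nonneg_of_mul_nonneg_right this (Real.exp_pos _)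

lemma zero_after (y y' y'' : ℝ → ℝ) (ρ L : ℝ) (hρ : 0 < ρ)
    (hy : ∀ ξ, HasDerivAt y (y' ξ) ξ) (hy' : ∀ ξ, HasDerivAt y' (y'' ξ) ξ)
    (h : ∀ ξ, 0 ≤ y ξ * (y'' ξ - 2 * ρ * y' ξ + ρ ^ 2 * y ξ))
    (lim : Tendsto y atTop (𝓝 L)) (lim' : Tendsto y' atTop (𝓝 0))
    (ξ₁ : ℝ) (h1 : y ξ₁ = 0) (ξ : ℝ) (hξ : ξ₁ ≤ ξ) : y ξ = 0 := by
  have hE : ∀ t, HasDerivAt (fun t => Real.exp (-(2 * ρ * t)))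
      (Real.exp (-(2 * ρ * t)) * (-(2 * ρ * 1))) t := fun t =>
    (((hasDerivAt_id t).const_mul (2 * ρ)).neg).exp
  have hd : ∀ t, HasDerivAt (fun t => Real.exp (-(2 * ρ * t)) * (y t * y t))
      (Real.exp (-(2 * ρ * t)) * (2 * (y t * y' t - ρ * (y t * y t)))) t := fun t => by
    refine ((hE t).mul ((hy t).mul (hy t))).congr_deriv ?_
    simp only [Pi.mul_apply]
    ring
  have hd2 : ∀ t, HasDerivAt (fun t => Real.exp (-(2 * ρ * t)) * (2 * (y t * y' t - ρ * (y t * y t))))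
      (Real.exp (-(2 * ρ * t)) * (2 * (y' t ^ 2 + y t * y'' t - 4 * ρ * (y t * y' t) + 2 * ρ ^ 2 * (y t * y t)))) t := fun t => by
    refine ((hE t).mul ((((hy t).mul (hy' t)).sub (((hy t).mul (hy t)).const_mul ρ)).const_mul 2)).congr_deriv ?_
    simp only [Pi.mul_apply, Pi.sub_apply]
    ring
  have hmono : Monotone (fun t => Real.exp (-(2 * ρ * t)) * (2 * (y t * y' t - ρ * (y t * y t)))) := by
    apply monotone_of_hasDerivAt_nonneg hd2
    intro t
    apply mul_nonneg (Real.exp_pos _).le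
    nlinarith [h t, sq_nonneg (y' t - ρ * y t)]
  have h0 : Tendsto (fun t => Real.exp (-(2 * ρ * t))) atTop (𝓝 0) := by
    apply Real.tendsto_exp_neg_atTop_nhds_zero.comp
    exact tendsto_id.const_mul_atTop (by positivity)
  have hl := h0.mul (((lim.mul lim').sub ((lim.mul lim).const_mul ρ)).const_mul 2)
  rw [zero_mul] at hl
  have hanti : Antitone (fun t => Real.exp (-(2 * ρ * t)) * (y t * y t)) := by
    apply antitone_of_hasDerivAt_nonpos hd
    intro t
    exact hmono.ge_of_tendsto hl t
  have := hanti hξ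
  simp only [h1, mul_zero] at this
  have hp := Real.exp_pos (-(2 * ρ * ξ))
  by_contra hne
  have : 0 < y ξ * y ξ := mul_self_pos.2 hne
  nlinarith [mul_pos hp this]

lemma decay_left (x x' : ℝ → ℝ) (c : ℝ) (hx : ∀ ξ, HasDerivAt x (x' ξ) ξ)
    (h : ∀ ξ ≤ 0, c * x ξ ≤ x' ξ) (ξ : ℝ) (hξ : ξ ≤ 0) : x ξ ≤ x 0 * Real.exp (c * ξ) := by
  have hd : ∀ t, HasDerivAt (fun t => Real.exp (-(c * t)) * x t)
      (Real.exp (-(c * t)) * (-(c * 1)) * x t + Real.exp (-(c * t)) * x' t) t := fun t =>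
    ((((hasDerivAt_id t).const_mul c).neg).exp).mul (hx t)
  have hm : MonotoneOn (fun t => Real.exp (-(c * t)) * x t) (Set.Iic 0) := by
    apply monotoneOn_of_deriv_nonneg (convex_Iic 0)
    · exact fun t _ => (hd t).continuousAt.continuousWithinAt
    · exact fun t _ => (hd t).differentiableAt.differentiableWithinAt
    · intro t ht
      rw [interior_Iic] at ht
      rw [(hd t).deriv]
      have := mul_le_mul_of_nonneg_left (h t (le_of_lt ht)) (Real.exp_pos (-(c * t))).le
      nlinarith
  have := hm (Set.mem_Iic.2 hξ) (Set.mem_Iic.2 le_rfl) hξ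
  simp only [mul_zero, neg_zero, Real.exp_zero, one_mul] at this
  have h2 := mul_le_mul_of_nonneg_left this (Real.exp_pos (c * ξ)).le
  rw [← mul_assoc, ← Real.exp_add] at h2
  simp at h2
  linarith

lemma core (P P' : ℝ → ℝ) (A σ Λ m a vp vs lo : ℝ) (V z : ℝ → ℝ)
    (hA : 0 < A) (hAa : A ≤ a ^ 2) (hσ : 0 < σ) (hσΛ : σ ≤ Λ) (hm : 0 < m) 
    (hlo : 0 < lo) (hvp : lo ≤ vp) (hlt : vp < vs)
    (hP : ∀ v, 0 < v → HasDerivAt P (P' v) v)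
    (hP' : ∀ v, lo ≤ v → -Λ ^ 2 ≤ P' v)
    (hPa : ∀ u v, 0 < u → u ≤ v → P v ≤ P u)
    (hPm : ∀ u v, lo ≤ u → u ≤ v → P u + Λ ^ 2 * u ≤ P v + Λ ^ 2 * v)
    (hconv : ∀ v, vp ≤ v → v ≤ vs →
      m * ((vs - v) * (v - vp)) ≤ -(σ ^ 2 * (v - vs) + P v - P vs))
    (hRH : σ ^ 2 * (vp - vs) + P vp - P vs = 0)
    (hpos : ∀ ξ, 0 < V ξ)
    (hV : ∀ ξ, HasDerivAt V (-(z ξ) / A) ξ)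
    (hz : ∀ ξ, HasDerivAt z ((2 * σ * z ξ + (σ ^ 2 * (V ξ - vs) + P (V ξ) - P vs)) / A) ξ)
    (hVb : Tendsto V atBot (𝓝 vs)) (hVt : Tendsto V atTop (𝓝 vp))
    (hzt : Tendsto z atTop (𝓝 0)) (h0 : V 0 = (vs + vp) / 2) :
    (∀ ξ ≤ 0, 0 ≤ vs - V ξ ∧ 0 ≤ z ξ ∧ z ξ ≤ Λ * (vs - V ξ) ∧
      vs - V ξ ≤ (vs - vp) * Real.exp (m / (6 * Λ * a ^ 2) * (vs - vp) * ξ)) ∧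
    (∀ ξ ≥ 0, 0 ≤ V ξ - vp ∧ 0 ≤ z ξ ∧ z ξ ≤ Λ * (V ξ - vp) ∧
      V ξ - vp ≤ (vs - vp) * Real.exp (-(m / (6 * Λ * a ^ 2) * (vs - vp) * ξ))) := by
  have hΛ : 0 < Λ := hσ.trans_le hσΛ
  have hV' : Tendsto (fun ξ => -(z ξ) / A) atTop (𝓝 0) := by
    simpa using hzt.neg.div_const A
  have key : ∀ e, 0 < e → σ ^ 2 * (e - vs) + P e - P vs = 0 → ∀ ξ₁, V ξ₁ = e → ∀ ξ, ξ₁ ≤ ξ → V ξ = e := by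
    intro e he hre ξ₁ h1 ξ hξ
    have := zero_after (fun t => V t - e) (fun t => -(z t) / A)
      (fun t => -((2 * σ * z t + (σ ^ 2 * (V t - vs) + P (V t) - P vs)) / A) / A) (σ / A) (vp - e)
      (by positivity) (fun t => (hV t).sub_const e) (fun t => ((hz t).neg).div_const A) ?_
      (hVt.sub_const e) hV' ξ₁ (by simp [h1]) ξ hξ
    · simpa [sub_eq_zero] using this
    · intro t
      have e1 : (V t - e) * (-((2 * σ * z t + (σ ^ 2 * (V t - vs) + P (V t) - P vs)) / A) / A - 2 * (σ / A) * (-(z t) / A) + (σ / A) ^ 2 * (V t - e)) = (V t - e) * (P e - P (V t)) / A ^ 2 := by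
        have : P vs = σ ^ 2 * (e - vs) + P e := by linarith
        rw [this]
        field_simp
        ring
      simp only [e1]
      apply div_nonneg _ (by positivity)
      rcases le_total (V t) e with hl | hl
      · exact mul_nonneg_of_nonpos_of_nonpos (by linarith) (by linarith [hPa _ _ (hpos t) hl])
      · exact mul_nonneg (by linarith) (by linarith [hPa _ _ he hl])
  have hcont : Continuous V := continuous_iff_continuousAt.2 fun t => (hV t).continuousAt
  have hvp0 : 0 < vp := by linarith
  have hle : ∀ ξ, V ξ ≤ vs := by
    intro ξ₀
    by_contra hc
    push Not at hc
    obtain ⟨N, hN⟩ := Filter.eventually_atTop.1 (hVt.eventually (gt_mem_nhds hlt))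
    have hM := hN (max N ξ₀) (le_max_left _ _)
    obtain ⟨ξ₁, h1, h2⟩ := intermediate_value_Icc' (le_max_right N ξ₀) hcont.continuousOn
      (show vs ∈ Set.Icc _ _ from ⟨hM.le, hc.le⟩)
    have := key vs (by linarith) (by ring) ξ₁ h2 _ h1.2
    linarith
  have hge : ∀ ξ, vp ≤ V ξ := by
    intro ξ₀
    by_contra hc
    push Not at hc
    obtain ⟨N, hN⟩ := Filter.eventually_atBot.1 (hVb.eventually (lt_mem_nhds hlt))
    have hM := hN (min N ξ₀) (min_le_left _ _)
    obtain ⟨ξ₁, h1, h2⟩ := intermediate_value_Icc' (min_le_right N ξ₀) hcont.continuousOn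
      (show vp ∈ Set.Icc _ _ from ⟨hc.le, hM.le⟩)
    have := key vp hvp0 hRH ξ₁ h2 _ h1.2
    linarith
  have hg : ∀ ξ, m * ((vs - V ξ) * (V ξ - vp)) ≤ -(σ ^ 2 * (V ξ - vs) + P (V ξ) - P vs) :=
    fun ξ => hconv _ (hge ξ) (hle ξ)
  have hg0 : ∀ ξ, 0 ≤ -(σ ^ 2 * (V ξ - vs) + P (V ξ) - P vs) := fun ξ =>
    le_trans (mul_nonneg hm.le (mul_nonneg (by linarith [hle ξ]) (by linarith [hge ξ]))) (hg ξ)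
  have hz0 : ∀ ξ, 0 ≤ z ξ := by
    refine integ_nonneg z _ (2 * σ / A) 0 (by positivity) hz ?_ hzt
    intro t
    rw [div_mul_eq_mul_div]
    apply div_le_div_of_nonneg_right _ hA.le
    linarith [hg0 t]
  have hzx : ∀ ξ, z ξ ≤ σ * (vs - V ξ) := by
    intro ξ
    have := integ_nonneg (fun t => σ * (vs - V t) - z t) _ (σ / A) _ (by positivity)
      (fun t => (((hV t).const_sub vs).const_mul σ).sub (hz t)) ?_
      (((hVt.const_sub vs).const_mul σ).sub hzt) ξ
    · linarith
    · intro t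
      have e1 : σ * -(-(z t) / A) - (2 * σ * z t + (σ ^ 2 * (V t - vs) + P (V t) - P vs)) / A
        = (- σ * z t - (σ ^ 2 * (V t - vs) + P (V t) - P vs)) / A := by field_simp; ring
      rw [e1, div_mul_eq_mul_div]
      apply div_le_div_of_nonneg_right _ hA.le
      have := hPa _ _ (hpos t) (hle t)
      nlinarith
  have hzy : ∀ ξ, z ξ ≤ Λ * (V ξ - vp) := by
    intro ξ
    have := integ_nonneg (fun t => Λ * (V t - vp) - z t) _ ((Λ + 2 * σ) / A) _ (by positivity)
      (fun t => (((hV t).sub_const vp).const_mul Λ).sub (hz t)) ?_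
      (((hVt.sub_const vp).const_mul Λ).sub hzt) ξ
    · linarith
    · intro t
      have e1 : Λ * (-(z t) / A) - (2 * σ * z t + (σ ^ 2 * (V t - vs) + P (V t) - P vs)) / A
        = (- (Λ + 2 * σ) * z t - (σ ^ 2 * (V t - vs) + P (V t) - P vs)) / A := by field_simp; ring
      rw [e1, div_mul_eq_mul_div]
      apply div_le_div_of_nonneg_right _ hA.le
      have := hPm _ _ hvp (hge t)
      have hy : 0 ≤ V t - vp := by linarith [hge t]
      nlinarith [mul_nonneg (mul_pos hσ hΛ).le hy, mul_nonneg (sq_nonneg σ) hy]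
  have hκ : 0 < 1 / (3 * Λ) := by positivity
  obtain ⟨κ, hκe⟩ : ∃ κ, κ = 1 / (3 * Λ) := ⟨_, rfl⟩
  rw [← hκe] at hκ
  have hκΛ : κ * Λ = 1 / 3 := by rw [hκe]; field_simp
  have hPd : ∀ ξ, HasDerivAt (fun t => P (V t)) (P' (V ξ) * (-(z ξ) / A)) ξ := fun ξ =>
    (hP _ (hpos ξ)).comp ξ (hV ξ)
  have hPt : Tendsto (fun t => P (V t)) atTop (𝓝 (P vp)) :=
    ((hP vp hvp0).continuousAt.tendsto).comp hVt
  have hzg : ∀ ξ, κ * -(σ ^ 2 * (V ξ - vs) + P (V ξ) - P vs) ≤ z ξ := by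
    intro ξ
    have := integ_nonneg (fun t => z t - κ * -(σ ^ 2 * (V t - vs) + P (V t) - P vs)) _
      ((2 * σ + κ * Λ ^ 2) / A) _ (by positivity)
      (fun t => (hz t).sub ((((((hV t).sub_const vs).const_mul (σ ^ 2)).add (hPd t)).sub_const (P vs)).neg.const_mul κ)) ?_
      (hzt.sub ((((((hVt.sub_const vs).const_mul (σ ^ 2)).add hPt).sub_const (P vs)).neg).const_mul κ)) ξ
    · linarith
    · intro t
      obtain ⟨g, hge'⟩ : ∃ g, g = -(σ ^ 2 * (V t - vs) + P (V t) - P vs) := ⟨_, rfl⟩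
      have hgg := hg0 t
      have e1 : (2 * σ * z t + (σ ^ 2 * (V t - vs) + P (V t) - P vs)) / A -
          κ * -(σ ^ 2 * (-(z t) / A) + P' (V t) * (-(z t) / A)) =
          (2 * σ * z t - g - κ * (σ ^ 2 + P' (V t)) * z t) / A := by
        rw [hge']; field_simp; ring
      rw [e1, div_mul_eq_mul_div]
      apply div_le_div_of_nonneg_right _ hA.le
      rw [← hge'] at hgg ⊢
      have h1 : -κ * (σ ^ 2 + P' (V t)) * z t ≤ κ * Λ ^ 2 * z t := by
        apply mul_le_mul_of_nonneg_right _ (hz0 t)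
        have := hP' (V t) (hvp.trans (hge t))
        nlinarith [sq_nonneg σ]
      have h2 : 2 * σ * κ + κ ^ 2 * Λ ^ 2 ≤ 1 := by
        have : κ * σ ≤ κ * Λ := mul_le_mul_of_nonneg_left hσΛ hκ.le
        nlinarith
      nlinarith [mul_nonneg hgg (sub_nonneg.2 h2)]
  have hanti : Antitone V := by
    apply antitone_of_hasDerivAt_nonpos hV
    intro t
    exact div_nonpos_of_nonpos_of_nonneg (by linarith [hz0 t]) hA.le
  have ha2 : 0 < a ^ 2 := hA.trans_le hAa
  have ha0 : a ≠ 0 := by rintro rfl; simp at ha2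
  obtain ⟨c, hc⟩ : ∃ c, c = m / (6 * Λ * a ^ 2) := ⟨_, rfl⟩
  have hc0 : 0 < c := by rw [hc]; positivity
  have hcA : c * A ≤ κ * m / 2 := by
    have : κ * m / 2 = c * a ^ 2 := by rw [hc, hκe]; field_simp; norm_num
    rw [this]
    exact mul_le_mul_of_nonneg_left hAa hc0.le
  have hd : 0 < vs - vp := by linarith
  rw [← hc]
  have hzz : ∀ ξ, κ * m * ((vs - V ξ) * (V ξ - vp)) ≤ z ξ := fun ξ => by
    have := mul_le_mul_of_nonneg_left (hg ξ) hκ.le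
    linarith [hzg ξ]
  constructor
  · intro ξ hξ
    have hx : 0 ≤ vs - V ξ := by linarith [hle ξ]
    refine ⟨hx, hz0 ξ, (hzx ξ).trans (mul_le_mul_of_nonneg_right hσΛ hx), ?_⟩
    have := decay_left (fun t => vs - V t) _ (c * (vs - vp)) (fun t => (hV t).const_sub vs) ?_ ξ hξ
    · simp only [h0] at this
      refine this.trans (mul_le_mul_of_nonneg_right (by linarith) (Real.exp_pos _).le)
    · intro t ht
      have hx : 0 ≤ vs - V t := by linarith [hle t]
      have h1 : (vs - vp) / 2 ≤ V t - vp := by linarith [hanti ht]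
      have h2 := hzz t
      have h3 := mul_le_mul_of_nonneg_left h1 (mul_nonneg (mul_pos hκ hm).le hx)
      rw [neg_div, neg_neg, le_div_iff₀ hA]
      have h4 := mul_le_mul_of_nonneg_right hcA (mul_nonneg hd.le hx)
      nlinarith
  · intro ξ hξ
    have hx : 0 ≤ V ξ - vp := by linarith [hge ξ]
    refine ⟨hx, hz0 ξ, hzy ξ, ?_⟩
    have := decay_left (fun t => V (-t) - vp) _ (c * (vs - vp))
      (fun t => ((hV (-t)).scomp t (hasDerivAt_neg t)).sub_const vp) ?_ (-ξ) (by linarith)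
    · simp only [neg_neg, neg_zero, h0, mul_neg] at this
      refine this.trans (mul_le_mul_of_nonneg_right (by linarith) (Real.exp_pos _).le)
    · intro t ht
      have hx : 0 ≤ V (-t) - vp := by linarith [hge (-t)]
      have h1 : (vs - vp) / 2 ≤ vs - V (-t) := by linarith [hanti (show 0 ≤ -t by linarith)]
      have h2 := hzz (-t)
      have h3 := mul_le_mul_of_nonneg_left h1 (mul_nonneg (mul_pos hκ hm).le hx)
      rw [smul_eq_mul, neg_div, neg_mul_neg, one_mul, le_div_iff₀ hA]
      have h4 := mul_le_mul_of_nonneg_right hcA (mul_nonneg hd.le hx)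
      nlinarith

lemma pP_deriv (γ v : ℝ) (hv : 0 < v) : HasDerivAt (pP γ) (-γ * v ^ (-γ - 1)) v := 
  Real.hasDerivAt_rpow_const (Or.inl hv.ne')

lemma pP_conv (γ hi vp vs v : ℝ) (hγ : 1 < γ) (hvp : 0 < vp) (hlt : vp < vs) (hvs : vs ≤ hi)
    (h1 : vp ≤ v) (h2 : v ≤ vs) (s2 : ℝ) (hRH : s2 * (vp - vs) + pP γ vp - pP γ vs = 0) :
    γ * (γ + 1) / 2 * hi ^ (-γ - 2) * ((vs - v) * (v - vp)) ≤
      -(s2 * (v - vs) + pP γ v - pP γ vs) := by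
  obtain ⟨m, hm⟩ : ∃ m, m = γ * (γ + 1) / 2 * hi ^ (-γ - 2) := ⟨_, rfl⟩
  rw [← hm]
  have hd : ∀ x, 0 < x → HasDerivAt (fun x => pP γ x - m * x ^ 2) (-γ * x ^ (-γ - 1) - m * (2 * x)) x := by
    intro x hx
    refine ((pP_deriv γ x hx).sub ((hasDerivAt_pow 2 x).const_mul m)).congr_deriv ?_
    norm_num
  have hd2 : ∀ x, 0 < x → HasDerivAt (fun x => -γ * x ^ (-γ - 1) - m * (2 * x))
      (-γ * ((-γ - 1) * x ^ (-γ - 1 - 1)) - m * (2 * 1)) x := by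
    intro x hx
    exact ((Real.hasDerivAt_rpow_const (Or.inl hx.ne')).const_mul (-γ)).sub
      (((hasDerivAt_id x).const_mul 2).const_mul m)
  have hc : ConvexOn ℝ (Set.Icc vp vs) (fun x => pP γ x - m * x ^ 2) := by
    refine convexOn_of_hasDerivWithinAt2_nonneg (convex_Icc _ _)
      (fun x hx => (hd x (hvp.trans_le hx.1)).continuousAt.continuousWithinAt)
      (fun x hx => (hd x (hvp.trans_le (interior_subset hx).1)).hasDerivWithinAt)
      (fun x hx => (hd2 x (hvp.trans_le (interior_subset hx).1)).hasDerivWithinAt) ?_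
    intro x hx
    have hx' := interior_subset hx
    have hx0 := hvp.trans_le hx'.1
    have e : -γ - 1 - 1 = -γ - 2 := by ring
    have : hi ^ (-γ - 2) ≤ x ^ (-γ - 2) :=
      Real.rpow_le_rpow_of_nonpos hx0 (hx'.2.trans hvs) (by linarith)
    rw [e, hm]
    nlinarith [mul_le_mul_of_nonneg_left this (show 0 ≤ γ * (γ + 1) by nlinarith)]
  have hD : 0 < vs - vp := by linarith
  have := hc.2 (Set.left_mem_Icc.2 hlt.le) (Set.right_mem_Icc.2 hlt.le)
    (show 0 ≤ (vs - v) / (vs - vp) from div_nonneg (by linarith) hD.le)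
    (show 0 ≤ (v - vp) / (vs - vp) from div_nonneg (by linarith) hD.le)
    (by field_simp; ring)
  have e : ((vs - v) / (vs - vp)) • vp + ((v - vp) / (vs - vp)) • vs = v := by
    simp only [smul_eq_mul]; field_simp; ring
  rw [e] at this
  simp only [smul_eq_mul] at this
  rw [div_mul_eq_mul_div, div_mul_eq_mul_div, ← add_div, le_div_iff₀ hD] at this
  have hp : pP γ vp = pP γ vs + s2 * (vs - vp) := by linarith
  rw [hp] at this
  refine le_of_mul_le_mul_right ?_ hD
  nlinarith

lemma pP_anti (γ u v : ℝ) (hγ : 1 < γ) (hu : 0 < u) (h : u ≤ v) : pP γ v ≤ pP γ u :=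
  Real.rpow_le_rpow_of_nonpos hu h (by linarith)

lemma pP_mono (γ lo u v : ℝ) (hγ : 1 < γ) (hlo : 0 < lo) (hu : lo ≤ u) (h : u ≤ v) :
    pP γ u + γ * lo ^ (-γ - 1) * u ≤ pP γ v + γ * lo ^ (-γ - 1) * v := by
  have hd : ∀ x, 0 < x → HasDerivAt (fun x => pP γ x + γ * lo ^ (-γ - 1) * x)
      (-γ * x ^ (-γ - 1) + γ * lo ^ (-γ - 1) * 1) x := fun x hx =>
    (pP_deriv γ x hx).add ((hasDerivAt_id x).const_mul _)
  have : MonotoneOn (fun x => pP γ x + γ * lo ^ (-γ - 1) * x) (Set.Ici lo) := by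
    apply monotoneOn_of_deriv_nonneg (convex_Ici lo)
    · exact fun x hx => (hd x (hlo.trans_le hx)).continuousAt.continuousWithinAt
    · exact fun x hx => (hd x (hlo.trans_le (interior_subset hx))).differentiableAt.differentiableWithinAt
    · intro x hx
      have hx' : lo ≤ x := interior_subset hx
      rw [(hd x (hlo.trans_le hx')).deriv]
      have : x ^ (-γ - 1) ≤ lo ^ (-γ - 1) := Real.rpow_le_rpow_of_nonpos hlo hx' (by linarith)
      nlinarith
  exact this (Set.mem_Ici.2 hu) (Set.mem_Ici.2 (hu.trans h)) h

lemma reduce (γ a s vs us vp up : ℝ) (U : ℝ → ℝ × ℝ) (hs : 0 < vs) (hp : 0 < vp)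
    (h : IsProfile γ a s (vs, us) (vp, up) U) :
    (∀ ξ, HasDerivAt (fun t => (U t).1) (deriv U ξ).1 ξ) ∧
    (∀ ξ, HasDerivAt (fun t => (U t).2) (deriv U ξ).2 ξ) ∧
    (∀ ξ, (a ^ 2 - s ^ 2) * (deriv U ξ).1 + s * (U ξ).1 + (U ξ).2 = s * vs + us) ∧
    (∀ ξ, (a ^ 2 - s ^ 2) * (deriv U ξ).2 + s * (U ξ).2 - pP γ (U ξ).1 = s * us - pP γ vs) ∧
    s * vp + up = s * vs + us ∧ s * up - pP γ vp = s * us - pP γ vs := by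
  obtain ⟨hC, hpos, -, hode, hb, ht, hb', ht'⟩ := h
  have hU : ∀ ξ, HasDerivAt U (deriv U ξ) ξ := fun ξ =>
    (hC.differentiable (by norm_num) ξ).hasDerivAt
  have hU' : ∀ ξ, HasDerivAt (deriv U) (deriv (deriv U) ξ) ξ := fun ξ =>
    ((ContDiff.differentiable_deriv_two hC) ξ).hasDerivAt
  have h1 : ∀ ξ, HasDerivAt (fun t => (U t).1) (deriv U ξ).1 ξ := fun ξ =>
    (ContinuousLinearMap.fst ℝ ℝ ℝ).hasFDerivAt.comp_hasDerivAt ξ (hU ξ)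
  have h2 : ∀ ξ, HasDerivAt (fun t => (U t).2) (deriv U ξ).2 ξ := fun ξ =>
    (ContinuousLinearMap.snd ℝ ℝ ℝ).hasFDerivAt.comp_hasDerivAt ξ (hU ξ)
  have hF : ∀ ξ, HasDerivAt (Fl γ ∘ U) (deriv (Fl γ ∘ U) ξ) ξ := fun ξ => by
    have h3 : HasDerivAt (fun t => pP γ (U t).1) (-γ * (U ξ).1 ^ (-γ - 1) * (deriv U ξ).1) ξ :=
      HasDerivAt.comp (h₂ := pP γ) (h := fun t => (U t).1) ξ (pP_deriv γ _ (hpos ξ)) (h1 ξ)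
    have h4 : HasDerivAt (fun t => -(U t).2) (-(deriv U ξ).2) ξ := (h2 ξ).neg
    have h5 : DifferentiableAt ℝ (Fl γ ∘ U) ξ := (h4.prodMk h3).differentiableAt
    exact h5.hasDerivAt
  have hΦ : ∀ ξ, HasDerivAt (fun t => (a ^ 2 - s ^ 2) • deriv U t + s • U t - Fl γ (U t)) 0 ξ := by
    intro ξ
    refine ((((hU' ξ).const_smul (a ^ 2 - s ^ 2)).add ((hU ξ).const_smul s)).sub (hF ξ)).congr_deriv ?_
    rw [hode ξ]
    module
  have hconst : ∀ x y, (a ^ 2 - s ^ 2) • deriv U x + s • U x - Fl γ (U x) =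
      (a ^ 2 - s ^ 2) • deriv U y + s • U y - Fl γ (U y) :=
    is_const_of_deriv_eq_zero (fun ξ => (hΦ ξ).differentiableAt) (fun ξ => (hΦ ξ).deriv)
  have hFc : ∀ v u : ℝ, 0 < v → ContinuousAt (Fl γ) (v, u) := by
    intro v u hv
    have : ContinuousAt (fun x : ℝ × ℝ => pP γ x.1) (v, u) :=
      ContinuousAt.comp (f := fun x : ℝ × ℝ => x.1) (g := pP γ) (pP_deriv γ v hv).continuousAt continuousAt_fst
    exact (continuousAt_snd.neg).prodMk this
  have lim : ∀ (l : Filter ℝ) [l.NeBot] (v u : ℝ), 0 < v → Tendsto U l (𝓝 (v, u)) → Tendsto (deriv U) l (𝓝 0) →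
      ∀ ξ, (a ^ 2 - s ^ 2) • deriv U ξ + s • U ξ - Fl γ (U ξ) = s • (v, u) - Fl γ (v, u) := by
    intro l _ v u hv hl hl' ξ
    have h3 := ((hl'.const_smul (a ^ 2 - s ^ 2)).add (hl.const_smul s)).sub ((hFc v u hv).tendsto.comp hl)
    have h4 : Tendsto (fun t => (a ^ 2 - s ^ 2) • deriv U t + s • U t - Fl γ (U t)) l
        (𝓝 ((a ^ 2 - s ^ 2) • deriv U ξ + s • U ξ - Fl γ (U ξ))) :=
      tendsto_const_nhds.congr (fun t => hconst ξ t)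
    have := tendsto_nhds_unique h4 h3
    rw [this]; simp
  have l1 := lim atBot vs us hs hb hb'
  have l2 := lim atTop vp up hp ht ht'
  have l3 := (l2 0).symm.trans (l1 0)
  refine ⟨h1, h2, fun ξ => ?_, fun ξ => ?_, ?_, ?_⟩
  · have := congrArg Prod.fst (l1 ξ)
    simpa [Fl] using this
  · have := congrArg Prod.snd (l1 ξ)
    simpa [Fl] using this
  · have := congrArg Prod.fst l3
    simpa [Fl] using this
  · have := congrArg Prod.snd l3
    simpa [Fl] using this

/-- exponential decay of the 1-relaxation shock profile towards its
end states, with rate proportional to the wave strength `δ₁`.  The constants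
`δ₀, C, c₀` depend only on `γ`, `a` and the fixed base state `vbar`. -/
theorem relaxation_shock_exponential_decay
    (γ a vbar : ℝ) (hγ : 1 < γ) (ha : 0 < a) (hvbar : 0 < vbar) :
    ∃ δ₀ C c₀ : ℝ, 0 < δ₀ ∧ 0 < C ∧ 0 < c₀ ∧
      ∀ (vs us vp up s₁ : ℝ) (US1 : ℝ → ℝ × ℝ),
        vs ∈ Set.Icc (vbar / 2) (2 * vbar) → vp ∈ Set.Icc (vbar / 2) (2 * vbar) →
        lam1 γ vp < s₁ → s₁ < lam1 γ vs → lam1 γ vs < 0 →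
        (∀ v ∈ Set.uIcc vs vp, Real.sqrt (γ * v ^ (-γ - 1)) < a) →
        IsProfile γ a s₁ (vs, us) (vp, up) US1 →
        (US1 0).1 = (vs + vp) / 2 →
        ‖((vp, up) : ℝ × ℝ) - (vs, us)‖ ≤ δ₀ →
        (∀ ξ : ℝ, ξ ≤ 0 →
            ‖US1 ξ - (vs, us)‖ ≤
              C * ‖((vp, up) : ℝ × ℝ) - (vs, us)‖ *
                Real.exp (-(c₀ * ‖((vp, up) : ℝ × ℝ) - (vs, us)‖ * |ξ|))) ∧
        (∀ ξ : ℝ, 0 ≤ ξ →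
            ‖US1 ξ - (vp, up)‖ ≤
              C * ‖((vp, up) : ℝ × ℝ) - (vs, us)‖ *
                Real.exp (-(c₀ * ‖((vp, up) : ℝ × ℝ) - (vs, us)‖ * |ξ|))) := by
  obtain ⟨Λ, hΛe⟩ : ∃ Λ, Λ = Real.sqrt (γ * (vbar / 2) ^ (-γ - 1)) := ⟨_, rfl⟩
  obtain ⟨m, hme⟩ : ∃ m, m = γ * (γ + 1) / 2 * (2 * vbar) ^ (-γ - 2) := ⟨_, rfl⟩
  have hγ0 : 0 < γ := by linarith
  have hΛ : 0 < Λ := by rw [hΛe]; positivity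
  have hm : 0 < m := by rw [hme]; positivity
  have hΛ2 : Λ ^ 2 = γ * (vbar / 2) ^ (-γ - 1) := by rw [hΛe]; exact Real.sq_sqrt (by positivity)
  refine ⟨1, 1 + 2 * Λ, m / (6 * Λ * a ^ 2) / (1 + Λ), one_pos, by positivity, by positivity, ?_⟩
  intro vs us vp up s U hvs hvp hs1 hs2 hs3 hsub hprof h0 _
  have hvs0 : 0 < vs := by linarith [hvs.1]
  have hvp0 : 0 < vp := by linarith [hvp.1]
  obtain ⟨h1, h2, e1, e2, r1, r2⟩ := reduce γ a s vs us vp up U hvs0 hvp0 hprof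
  obtain ⟨-, hpos, -, -, hb, ht, -, -⟩ := hprof
  unfold lam1 at hs1 hs2 hs3
  have hlt : vp < vs := by
    by_contra hc
    push Not at hc
    have : vp ^ (-γ - 1) ≤ vs ^ (-γ - 1) := Real.rpow_le_rpow_of_nonpos hvs0 hc (by linarith)
    have := Real.sqrt_le_sqrt (mul_le_mul_of_nonneg_left this hγ0.le)
    linarith
  obtain ⟨σ, hσe⟩ : ∃ σ, σ = -s := ⟨_, rfl⟩
  have hsσ : s = -σ := by linarith
  subst hsσ
  have hσ : 0 < σ := by linarith
  have hσvp : σ < Real.sqrt (γ * vp ^ (-γ - 1)) := by linarith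
  have hσΛ : σ ≤ Λ := by
    refine hσvp.le.trans ?_
    rw [hΛe]
    apply Real.sqrt_le_sqrt
    exact mul_le_mul_of_nonneg_left (Real.rpow_le_rpow_of_nonpos (by positivity) hvp.1 (by linarith)) hγ0.le
  have hσa : σ < a := hσvp.trans (hsub vp Set.right_mem_uIcc)
  have hA : 0 < a ^ 2 - (-σ) ^ 2 := by nlinarith
  have hAa : a ^ 2 - (-σ) ^ 2 ≤ a ^ 2 := by nlinarith
  obtain ⟨A, hAe⟩ : ∃ A, A = a ^ 2 - (-σ) ^ 2 := ⟨_, rfl⟩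
  rw [← hAe] at hA hAa e1 e2
  have hup : up = us + σ * (vp - vs) := by linarith
  have hRH : σ ^ 2 * (vp - vs) + pP γ vp - pP γ vs = 0 := by rw [hup] at r2; linarith
  have hV : ∀ ξ, HasDerivAt (fun t => (U t).1) (-(-σ * ((U ξ).1 - vs) + ((U ξ).2 - us)) / A) ξ := by
    intro ξ
    refine (h1 ξ).congr_deriv ?_
    rw [eq_div_iff hA.ne']
    linarith [e1 ξ]
  have hz : ∀ ξ, HasDerivAt (fun t => -σ * ((U t).1 - vs) + ((U t).2 - us))
      ((2 * σ * (-σ * ((U ξ).1 - vs) + ((U ξ).2 - us)) + (σ ^ 2 * ((U ξ).1 - vs) + pP γ (U ξ).1 - pP γ vs)) / A) ξ := by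
    intro ξ
    refine ((((h1 ξ).sub_const vs).const_mul (-σ)).add ((h2 ξ).sub_const us)).congr_deriv ?_
    rw [eq_div_iff hA.ne']
    have f1 : A * (deriv U ξ).1 = -(-σ * ((U ξ).1 - vs) + ((U ξ).2 - us)) := by linarith [e1 ξ]
    have f2 : A * (deriv U ξ).2 = σ * ((U ξ).2 - us) + pP γ (U ξ).1 - pP γ vs := by linarith [e2 ξ]
    calc _ = -σ * (A * (deriv U ξ).1) + A * (deriv U ξ).2 := by ring
      _ = _ := by rw [f1, f2]; ring
  have ht1 : Tendsto (fun t => (U t).1) atTop (𝓝 vp) := (continuous_fst.tendsto _).comp ht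
  have ht2 : Tendsto (fun t => (U t).2) atTop (𝓝 up) := (continuous_snd.tendsto _).comp ht
  have hb1 : Tendsto (fun t => (U t).1) atBot (𝓝 vs) := (continuous_fst.tendsto _).comp hb
  have hzt : Tendsto (fun t => -σ * ((U t).1 - vs) + ((U t).2 - us)) atTop (𝓝 0) := by
    have := ((ht1.sub_const vs).const_mul (-σ)).add (ht2.sub_const us)
    rwa [show -σ * (vp - vs) + (up - us) = 0 by rw [hup]; ring] at this
  obtain ⟨R1, R2⟩ := core (pP γ) (fun v => -γ * v ^ (-γ - 1)) A σ Λ m a vp vs (vbar / 2)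
    (fun t => (U t).1) (fun t => -σ * ((U t).1 - vs) + ((U t).2 - us)) hA hAa hσ hσΛ hm
    (by positivity) hvp.1 hlt (fun v hv => pP_deriv γ v hv)
    (fun v hv => by
      have : v ^ (-γ - 1) ≤ (vbar / 2) ^ (-γ - 1) :=
        Real.rpow_le_rpow_of_nonpos (by positivity) hv (by linarith)
      rw [hΛ2]
      nlinarith)
    (fun u v hu h => pP_anti γ u v hγ hu h)
    (fun u v hu h => by rw [hΛ2]; exact pP_mono γ _ u v hγ (by positivity) hu h)
    (fun v hv1 hv2 => by rw [hme]; exact pP_conv γ _ vp vs v hγ hvp0 hlt hvs.2 hv1 hv2 _ hRH)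
    hRH hpos hV hz hb1 ht1 hzt h0
  obtain ⟨c, hce⟩ : ∃ c, c = m / (6 * Λ * a ^ 2) := ⟨_, rfl⟩
  have hc : 0 < c := by rw [hce]; positivity
  rw [← hce] at R1 R2 ⊢
  obtain ⟨D, hDe⟩ : ∃ D, D = ‖((vp, up) : ℝ × ℝ) - (vs, us)‖ := ⟨_, rfl⟩
  rw [← hDe]
  have hd : 0 < vs - vp := by linarith
  have hD : D = max |vp - vs| |up - us| := by rw [hDe]; rfl
  have hD1 : vs - vp ≤ D := by
    rw [hD]; refine le_trans ?_ (le_max_left _ _)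
    rw [abs_sub_comm]; exact le_abs_self _
  have hD2 : D ≤ (1 + Λ) * (vs - vp) := by
    rw [hD, hup, abs_sub_comm vp vs, abs_of_pos hd]
    apply max_le
    · nlinarith
    · have k := mul_le_mul_of_nonneg_right hσΛ hd.le
      have k2 := mul_nonneg hσ.le hd.le
      rw [abs_le]; constructor <;> linarith
  have hexp : ∀ r, 0 ≤ r → Real.exp (-(c * (vs - vp) * r)) ≤ Real.exp (-(c / (1 + Λ) * D * r)) := by
    intro r hr
    apply Real.exp_le_exp.2
    apply neg_le_neg
    apply mul_le_mul_of_nonneg_right _ hr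
    rw [div_mul_eq_mul_div, div_le_iff₀ (by positivity)]
    nlinarith [mul_le_mul_of_nonneg_left hD2 hc.le]
  have fin : ∀ x r n : ℝ, 0 ≤ r → x ≤ (vs - vp) * Real.exp (-(c * (vs - vp) * r)) →
      n ≤ (1 + 2 * Λ) * x → n ≤ (1 + 2 * Λ) * D * Real.exp (-(c / (1 + Λ) * D * r)) := by
    intro x r n hr hx hn
    rw [mul_assoc]
    refine hn.trans (mul_le_mul_of_nonneg_left ?_ (by positivity))
    exact hx.trans (mul_le_mul hD1 (hexp r hr) (Real.exp_pos _).le (by linarith))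
  constructor
  · intro ξ hξ
    obtain ⟨a1, a2, a3, a4⟩ := R1 ξ hξ
    refine fin (vs - (U ξ).1) |ξ| _ (abs_nonneg _) ?_ ?_
    · rw [abs_of_nonpos hξ]
      simpa using a4
    · have : ‖U ξ - (vs, us)‖ = max |(U ξ).1 - vs| |(U ξ).2 - us| := rfl
      rw [this]
      have k := mul_le_mul_of_nonneg_right hσΛ a1
      have k2 := mul_nonneg hΛ.le a1
      have k3 := mul_nonneg hσ.le a1
      apply max_le <;> rw [abs_le] <;> constructor <;> linarith
  · intro ξ hξ
    obtain ⟨a1, a2, a3, a4⟩ := R2 ξ hξ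
    refine fin ((U ξ).1 - vp) |ξ| _ (abs_nonneg _) ?_ ?_
    · rw [abs_of_nonneg hξ]
      simpa using a4
    · have : ‖U ξ - (vp, up)‖ = max |(U ξ).1 - vp| |(U ξ).2 - up| := rfl
      rw [this, hup]
      have k := mul_le_mul_of_nonneg_right hσΛ a1
      have k2 := mul_nonneg hΛ.le a1
      have k3 := mul_nonneg hσ.le a1
      apply max_le <;> rw [abs_le] <;> constructor <;> linarith
end

section
/- Fix γ > 1 and a base state v̄ > 0. There exist δ₀ > 0 and C > 0 such that the following holds. Let U₋ = (v₋,u₋), U* = (v*,u*), U₊ = (v₊,u₊) with v₋, v*, v₊ ∈ [v̄/2, 2v̄] and speeds s₁, s₂ satisfy the incoming Rankine–Hugoniot conditions −s₁(U₊ − U*) + F(U₊) − F(U*) = 0 and −s₂(U* − U₋) + F(U*) − F(U₋) = 0 together with the Lax conditions λ₁(v₊) < s₁ < λ₁(v*) < 0 < λ₂(v*) < s₂ < λ₂(v₋), and suppose the strengths δ₁ = |U₊ − U*| and δ₂ = |U* − U₋| satisfy δ₁, δ₂ ≤ δ₀. Then there exist a state Ũ* = (ṽ*, ũ*) with ṽ*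 > 0 and speeds s̃₁, s̃₂ satisfying the outgoing Rankine–Hugoniot conditions −s̃₁(Ũ* − U₋) + F(Ũ*) − F(U₋) = 0 and −s̃₂(U₊ − Ũ*) + F(U₊) − F(Ũ*) = 0 together with the Lax conditions λ₁(ṽ*) < s̃₁ < λ₁(v₋) < 0 < λ₂(v₊) < s̃₂ < λ₂(ṽ*), and the outgoing strengths δ̃₁ = |Ũ* − U₋|, δ̃₂ = |U₊ − Ũ*| satisfy |δ̃₁ − δ₁| ≤ C δ₁ δ₂ and |δ̃₂ − δ₂| ≤ C δ₁ δ₂. -/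
open Real

noncomputable def gR (γ v : ℝ) : ℝ := γ * v ^ (-γ - 1)
noncomputable def gS (γ x y : ℝ) : ℝ := Real.sqrt ((pP γ x - pP γ y) * (y - x))
noncomputable def gG (γ x y : ℝ) : ℝ := Real.sqrt ((pP γ x - pP γ y) / (y - x))

lemma hasDeriv_pP (γ x : ℝ) (hx : 0 < x) : HasDerivAt (pP γ) (-gR γ x) x := by
  have := Real.hasDerivAt_rpow_const (x := x) (p := -γ) (Or.inl hx.ne')
  have e : -gR γ x = -γ * x ^ (-γ - 1) := by unfold gR; ring
  rw [e]
  exact this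

lemma hasDeriv_gR (γ x : ℝ) (hx : 0 < x) :
    HasDerivAt (gR γ) (-(γ * (γ + 1) * x ^ (-γ - 2))) x := by
  have := (Real.hasDerivAt_rpow_const (x := x) (p := -γ - 1) (Or.inl hx.ne')).const_mul γ
  rw [show -γ - 1 - 1 = -γ - 2 by ring] at this
  have e : -(γ * (γ + 1) * x ^ (-γ - 2)) = γ * ((-γ - 1) * x ^ (-γ - 2)) := by ring
  rw [e]
  exact this

lemma gR_pos {γ x : ℝ} (hγ : 1 < γ) (hx : 0 < x) : 0 < gR γ x := by
  unfold gR
  have := Real.rpow_pos_of_pos hx (-γ - 1)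
  positivity

lemma gR_lt {γ x y : ℝ} (hγ : 1 < γ) (hx : 0 < x) (hxy : x < y) : gR γ y < gR γ x := by
  unfold gR
  have := Real.rpow_lt_rpow_of_neg hx hxy (show -γ - 1 < 0 by linarith)
  exact mul_lt_mul_of_pos_left this (by linarith)

lemma gR_le {γ x y : ℝ} (hγ : 1 < γ) (hx : 0 < x) (hxy : x ≤ y) : gR γ y ≤ gR γ x := by
  rcases hxy.eq_or_lt with h | h
  · rw [h]
  · exact (gR_lt hγ hx h).le

lemma mvt_pP {γ x y : ℝ} (hx : 0 < x) (hxy : x < y) :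
    ∃ ξ ∈ Set.Ioo x y, (pP γ x - pP γ y) / (y - x) = gR γ ξ := by
  obtain ⟨ξ, hξ, h⟩ := exists_hasDerivAt_eq_slope (pP γ) (fun z => -gR γ z) hxy
    (fun z hz => (hasDeriv_pP γ z (lt_of_lt_of_le hx hz.1)).continuousAt.continuousWithinAt)
    (fun z hz => hasDeriv_pP γ z (hx.trans hz.1))
  refine ⟨ξ, hξ, ?_⟩
  have : (pP γ x - pP γ y) / (y - x) = -((pP γ y - pP γ x) / (y - x)) := by ring
  rw [this, ← h]; simp

lemma q_bounds {γ x y : ℝ} (hγ : 1 < γ) (hx : 0 < x) (hxy : x < y) :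
    gR γ y < (pP γ x - pP γ y) / (y - x) ∧ (pP γ x - pP γ y) / (y - x) < gR γ x := by
  obtain ⟨ξ, hξ, h⟩ := mvt_pP (γ := γ) hx hxy
  rw [h]
  exact ⟨gR_lt hγ (hx.trans hξ.1) hξ.2, gR_lt hγ hx hξ.1⟩

lemma q_pos {γ x y : ℝ} (hγ : 1 < γ) (hx : 0 < x) (hxy : x < y) :
    0 < (pP γ x - pP γ y) / (y - x) :=
  (gR_pos hγ (hx.trans hxy)).trans (q_bounds hγ hx hxy).1

lemma pP_lt {γ x y : ℝ} (hγ : 1 < γ) (hx : 0 < x) (hxy : x < y) : pP γ y < pP γ x := by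
  have := q_pos hγ hx hxy
  have h2 : 0 < y - x := by linarith
  have := (div_pos_iff_of_pos_right h2).1 this
  linarith

lemma pP_le {γ x y : ℝ} (hγ : 1 < γ) (hx : 0 < x) (hxy : x ≤ y) : pP γ y ≤ pP γ x := by
  rcases hxy.eq_or_lt with h | h
  · rw [h]
  · exact (pP_lt hγ hx h).le

lemma gS_eq {γ x y : ℝ} (hxy : x < y) : gS γ x y = (y - x) * gG γ x y := by
  unfold gS gG
  have h : 0 < y - x := by linarith
  have : (pP γ x - pP γ y) * (y - x) = (y - x) ^ 2 * ((pP γ x - pP γ y) / (y - x)) := by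
    field_simp
  rw [this, Real.sqrt_mul (by positivity), Real.sqrt_sq h.le]

lemma gG_sq {γ x y : ℝ} (hγ : 1 < γ) (hx : 0 < x) (hxy : x < y) :
    gG γ x y * gG γ x y * (y - x) = pP γ x - pP γ y := by
  unfold gG
  have h : 0 < y - x := by linarith
  rw [Real.mul_self_sqrt (q_pos hγ hx hxy).le]
  field_simp

lemma gG_lt {γ x y : ℝ} (hγ : 1 < γ) (hx : 0 < x) (hxy : x < y) :
    Real.sqrt (gR γ y) < gG γ x y ∧ gG γ x y < Real.sqrt (gR γ x) := by
  have := q_bounds hγ hx hxy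
  exact ⟨Real.sqrt_lt_sqrt (gR_pos hγ (hx.trans hxy)).le this.1,
    Real.sqrt_lt_sqrt (q_pos hγ hx hxy).le this.2⟩

lemma gG_anti {γ x x' y : ℝ} (hγ : 1 < γ) (hx : 0 < x) (hxx : x < x') (hxy : x' < y) :
    gG γ x' y ≤ gG γ x y := by
  unfold gG
  apply Real.sqrt_le_sqrt
  have h1 := (q_bounds hγ hx hxx).1
  have h2 := (q_bounds hγ (hx.trans hxx) hxy).2
  rw [div_le_div_iff₀ (by linarith) (by linarith)]
  rw [lt_div_iff₀ (by linarith)] at h1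
  rw [div_lt_iff₀ (by linarith)] at h2
  nlinarith

/-- slope lower bound -/
lemma gS_slope {γ x x' y c : ℝ} (hγ : 1 < γ) (hx : 0 < x) (hxx : x ≤ x') (hxy : x' < y)
    (hc : c ≤ Real.sqrt (gR γ y)) : c * (x' - x) ≤ gS γ x y - gS γ x' y := by
  rcases hxx.eq_or_lt with h | h
  · subst h; simp
  · rw [gS_eq (h.trans hxy), gS_eq hxy]
    have h1 := gG_anti hγ hx h hxy
    have h2 := (gG_lt hγ (hx.trans h) hxy).1
    nlinarith

lemma gS_nonneg (γ x y : ℝ) : 0 ≤ gS γ x y := Real.sqrt_nonneg _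

lemma gS_symm (γ x y : ℝ) : gS γ x y = gS γ y x := by
  unfold gS; congr 1; ring

lemma gS_self (γ x : ℝ) : gS γ x x = 0 := by unfold gS; simp

lemma gS_lt {γ x y m : ℝ} (hγ : 1 < γ) (hx : 0 < x) (hxy : x ≤ y) (hm : y < m) :
    gS γ x y < gS γ x m := by
  unfold gS
  have h1 := pP_le hγ hx hxy
  have h2 := pP_lt hγ (hx.trans_le hxy) hm
  apply Real.sqrt_lt_sqrt
  · exact mul_nonneg (by linarith) (by linarith)
  · nlinarith

lemma second_diff {γ w d e k : ℝ} (hγ : 1 < γ) (hk : 0 < k) (hw : k ≤ w) (hd : 0 < d)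
    (he : 0 < e) :
    0 ≤ pP γ w - pP γ (w + d) - pP γ (w + e) + pP γ (w + e + d) ∧
    pP γ w - pP γ (w + d) - pP γ (w + e) + pP γ (w + e + d) ≤
      γ * (γ + 1) * k ^ (-γ - 2) * (d * e) := by
  have hw0 : 0 < w := hk.trans_le hw
  have hder : ∀ z, 0 < z → HasDerivAt (fun z => pP γ z - pP γ (z + d))
      (-gR γ z - -gR γ (z + d)) z := fun z hz =>
    (hasDeriv_pP γ z hz).sub ((hasDeriv_pP γ (z + d) (by linarith)).comp_add_const z d)
  obtain ⟨ξ, hξ, h⟩ := exists_hasDerivAt_eq_slope (fun z => pP γ z - pP γ (z + d))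
    (fun z => -gR γ z - -gR γ (z + d)) (show w < w + e by linarith)
    (fun z hz => (hder z (lt_of_lt_of_le hw0 hz.1)).continuousAt.continuousWithinAt)
    (fun z hz => hder z (hw0.trans hz.1))
  have hξ0 : 0 < ξ := hw0.trans hξ.1
  obtain ⟨η, hη, h'⟩ := exists_hasDerivAt_eq_slope (gR γ)
    (fun x => -(γ * (γ + 1) * x ^ (-γ - 2))) (show ξ < ξ + d by linarith)
    (fun z hz => (hasDeriv_gR γ z (lt_of_lt_of_le hξ0 hz.1)).continuousAt.continuousWithinAt)
    (fun z hz => hasDeriv_gR γ z (hξ0.trans hz.1))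
  have hη0 : 0 < η := hξ0.trans hη.1
  simp only [add_sub_cancel_left] at h h'
  rw [eq_div_iff he.ne'] at h
  rw [eq_div_iff hd.ne'] at h'
  have key : pP γ w - pP γ (w + d) - pP γ (w + e) + pP γ (w + e + d)
      = γ * (γ + 1) * η ^ (-γ - 2) * (d * e) := by
    have : gR γ (ξ + d) - gR γ ξ = -(γ * (γ + 1) * η ^ (-γ - 2) * d) := by linarith
    have h2 : (-gR γ ξ - -gR γ (ξ + d)) * e = -(γ * (γ + 1) * η ^ (-γ - 2) * d) * e := by
      rw [← this]; ring
    linarith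
  rw [key]
  have hp := Real.rpow_pos_of_pos hη0 (-γ - 2)
  have hle : η ^ (-γ - 2) ≤ k ^ (-γ - 2) :=
    Real.rpow_le_rpow_of_nonpos hk (by linarith [hξ.1, hη.1]) (by linarith)
  constructor
  · positivity
  · gcongr

lemma gS_diff {γ x y x' y' c D : ℝ} (hγ : 1 < γ) (hx : 0 < x) (hxy : x < y) (hx' : 0 < x')
    (hxy' : x' < y') (hd : y - x = y' - x') (hc : 0 < c)
    (hy : c ≤ Real.sqrt (gR γ y)) (hy' : c ≤ Real.sqrt (gR γ y'))
    (hD : pP γ x - pP γ y - (pP γ x' - pP γ y') = D) (hD0 : 0 ≤ D) :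
    gS γ x' y' ≤ gS γ x y ∧ gS γ x y - gS γ x' y' ≤ D / (2 * c) := by
  have h1 := (gG_lt hγ hx hxy).1
  have h2 := (gG_lt hγ hx' hxy').1
  have e1 := gG_sq hγ hx hxy
  have e2 := gG_sq hγ hx' hxy'
  rw [gS_eq hxy, gS_eq hxy', ← hd]
  rw [← hd] at e2
  set G := gG γ x y
  set G' := gG γ x' y'
  have hl : 0 < y - x := by linarith
  set l := y - x
  have hfac : (l * G - l * G') * (G + G') = D := by rw [← hD, ← e1, ← e2]; ring
  have hG : 2 * c ≤ G + G' := by linarith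
  have hnn : 0 ≤ l * G - l * G' := by
    by_contra hneg
    push Not at hneg
    nlinarith [mul_pos (neg_pos.2 hneg) (show 0 < G + G' by linarith)]
  refine ⟨by linarith, ?_⟩
  rw [le_div_iff₀ (by linarith)]
  nlinarith

lemma lt_of_sqrt_gR {γ x y : ℝ} (hγ : 1 < γ) (hy : 0 < y)
    (h : Real.sqrt (gR γ y) < Real.sqrt (gR γ x)) : x < y := by
  by_contra hn
  push Not at hn
  exact absurd (Real.sqrt_le_sqrt (gR_le hγ hy hn)) (not_le.2 h)

lemma speed_eq {γ x y s : ℝ} (hxy : x < y) (hs : 0 ≤ s)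
    (h : s * s * (y - x) = pP γ x - pP γ y) : s = gG γ x y := by
  unfold gG
  rw [← h, mul_div_assoc, div_self (by linarith), mul_one, Real.sqrt_mul_self hs]

lemma core_s15 {γ a b m k c : ℝ} (hγ : 1 < γ) (hk : 0 < k) (ha : 0 < a) (hb : 0 < b)
    (ham : a < m) (hbm : b < m) (hw0 : k ≤ a + b - m) (hc : 0 < c)
    (hcm : c ≤ Real.sqrt (gR γ m)) :
    ∃ w, 0 < w ∧ w < a ∧ w < b ∧ gS γ w a + gS γ w b = gS γ b m + gS γ a m ∧
      0 ≤ w - (a + b - m) ∧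
      w - (a + b - m) ≤ γ * (γ + 1) * k ^ (-γ - 2) / (2 * c ^ 2) * ((m - b) * (m - a)) ∧
      |gS γ w a - gS γ b m| ≤ γ * (γ + 1) * k ^ (-γ - 2) / (2 * c) * ((m - b) * (m - a)) := by
  have hca : c ≤ Real.sqrt (gR γ a) := hcm.trans (Real.sqrt_le_sqrt (gR_le hγ ha ham.le))
  have hcb : c ≤ Real.sqrt (gR γ b) := hcm.trans (Real.sqrt_le_sqrt (gR_le hγ hb hbm.le))
  obtain ⟨D0, D1⟩ := second_diff (w := a + b - m) (d := m - b) (e := m - a) hγ hk hw0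
    (by linarith) (by linarith)
  rw [show a + b - m + (m - b) = a by ring, show a + b - m + (m - a) = b by ring,
    show b + (m - b) = m by ring] at D0 D1
  set K := γ * (γ + 1) * k ^ (-γ - 2)
  set w0 := a + b - m with hw0def
  have hw0p : 0 < w0 := hk.trans_le hw0
  have hw0a : w0 < a := by linarith
  have hw0b : w0 < b := by linarith
  set D := pP γ w0 - pP γ a - pP γ b + pP γ m with hD
  obtain ⟨A1, A2⟩ := gS_diff (D := D) hγ hw0p hw0a hb hbm (by linarith) hc hca hcm
    (by rw [hD]; ring) D0
  obtain ⟨B1, B2⟩ := gS_diff (D := D) hγ hw0p hw0b ha ham (by linarith) hc hcb hcm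
    (by rw [hD]; ring) D0
  have hmin : w0 ≤ min a b := le_min hw0a.le hw0b.le
  have hend : gS γ (min a b) a + gS γ (min a b) b < gS γ b m + gS γ a m := by
    rcases le_total a b with h | h
    · rw [min_eq_left h, gS_self]
      linarith [gS_lt hγ ha h hbm, gS_nonneg γ b m]
    · rw [min_eq_right h, gS_self]
      linarith [gS_lt hγ hb h ham, gS_nonneg γ a m]
  have hpc : ContinuousOn (pP γ) (Set.Icc w0 (min a b)) := fun z hz =>
    (hasDeriv_pP γ z (lt_of_lt_of_le hw0p hz.1)).continuousAt.continuousWithinAt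
  have hcont : ContinuousOn (fun w => gS γ w a + gS γ w b) (Set.Icc w0 (min a b)) := by
    unfold gS
    fun_prop
  obtain ⟨w, hw, hweq⟩ := intermediate_value_Icc' hmin hcont
    (show gS γ b m + gS γ a m ∈ _ from ⟨hend.le, by linarith⟩)
  simp only at hweq
  have hwne : w < min a b := lt_of_le_of_ne hw.2 (by rintro rfl; linarith)
  have hwa : w < a := hwne.trans_le (min_le_left _ _)
  have hwb : w < b := hwne.trans_le (min_le_right _ _)
  have sa := gS_slope hγ hw0p hw.1 hwa hca
  have sb := gS_slope hγ hw0p hw.1 hwb hcb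
  have hww : 0 ≤ w - w0 := by linarith [hw.1]
  have hcw : 0 ≤ c * (w - w0) := by positivity
  have hDK : D / (2 * c) ≤ K / (2 * c) * ((m - b) * (m - a)) := by
    rw [div_mul_eq_mul_div]; gcongr
  refine ⟨w, hw0p.trans_le hw.1, hwa, hwb, hweq, hww, ?_, ?_⟩
  · have h1 : c * (w - w0) ≤ K / (2 * c) * ((m - b) * (m - a)) := by linarith
    have h2 : K / (2 * c ^ 2) * ((m - b) * (m - a)) =
      (K / (2 * c) * ((m - b) * (m - a))) / c := by field_simp
    rw [h2, le_div_iff₀ hc]; linarith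
  · rw [abs_le]; constructor <;> linarith

/-- Glimm-type interaction estimate.  The collision of the incoming
2-shock and 1-shock produces an outgoing Riemann solution consisting of two shocks
whose strengths differ from the incoming ones by `O(δ₁ δ₂)`. -/
theorem glimm_interaction_estimate
    (γ vbar : ℝ) (hγ : 1 < γ) (hvbar : 0 < vbar) :
    ∃ δ₀ C : ℝ, 0 < δ₀ ∧ 0 < C ∧
      ∀ (Um Us Up : ℝ × ℝ) (s₁ s₂ : ℝ),
        Um.1 ∈ Set.Icc (vbar / 2) (2 * vbar) →
        Us.1 ∈ Set.Icc (vbar / 2) (2 * vbar) →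
        Up.1 ∈ Set.Icc (vbar / 2) (2 * vbar) →
        (-s₁) • (Up - Us) + (Fl γ Up - Fl γ Us) = 0 →
        (-s₂) • (Us - Um) + (Fl γ Us - Fl γ Um) = 0 →
        lam1 γ Up.1 < s₁ → s₁ < lam1 γ Us.1 →
        lam2 γ Us.1 < s₂ → s₂ < lam2 γ Um.1 →
        ‖Up - Us‖ ≤ δ₀ → ‖Us - Um‖ ≤ δ₀ →
        ∃ (Ut : ℝ × ℝ) (st₁ st₂ : ℝ),
          0 < Ut.1 ∧
          (-st₁) • (Ut - Um) + (Fl γ Ut - Fl γ Um) = 0 ∧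
          (-st₂) • (Up - Ut) + (Fl γ Up - Fl γ Ut) = 0 ∧
          lam1 γ Ut.1 < st₁ ∧ st₁ < lam1 γ Um.1 ∧ lam1 γ Um.1 < 0 ∧
          0 < lam2 γ Up.1 ∧ lam2 γ Up.1 < st₂ ∧ st₂ < lam2 γ Ut.1 ∧
          |‖Ut - Um‖ - ‖Up - Us‖| ≤ C * ‖Up - Us‖ * ‖Us - Um‖ ∧
          |‖Up - Ut‖ - ‖Us - Um‖| ≤ C * ‖Up - Us‖ * ‖Us - Um‖ := by
  set k := vbar / 4 with hk
  have hkp : 0 < k := by positivity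
  set c := Real.sqrt (gR γ (2 * vbar)) with hcdef
  have hc : 0 < c := Real.sqrt_pos.2 (gR_pos hγ (by positivity))
  set K := γ * (γ + 1) * k ^ (-γ - 2) with hK
  have hKp : 0 < K := by
    have := Real.rpow_pos_of_pos hkp (-γ - 2)
    positivity
  refine ⟨k, K / (2 * c ^ 2) + K / (2 * c), hkp, by positivity, ?_⟩
  rintro ⟨a, ua⟩ ⟨m, um⟩ ⟨b, ub⟩ s₁ s₂ ⟨ha1, ha2⟩ ⟨hm1, hm2⟩ ⟨hb1, hb2⟩ R1 R2 L1 L2 L3 L4 N1 N2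
  simp only [Fl, Prod.mk_sub_mk, Prod.smul_mk, Prod.mk_add_mk, smul_eq_mul, Prod.mk_eq_zero,
    Prod.norm_mk, Real.norm_eq_abs] at *
  obtain ⟨R1a, R1b⟩ := R1
  obtain ⟨R2a, R2b⟩ := R2
  have ha : 0 < a := by linarith
  have hb : 0 < b := by linarith
  have hm : 0 < m := by linarith
  change -Real.sqrt (gR γ b) < s₁ at L1
  change s₁ < -Real.sqrt (gR γ m) at L2
  change Real.sqrt (gR γ m) < s₂ at L3
  change s₂ < Real.sqrt (gR γ a) at L4
  have hbm : b < m := lt_of_sqrt_gR hγ hm (by linarith)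
  have ham : a < m := lt_of_sqrt_gR hγ hm (by linarith)
  have hmn := Real.sqrt_nonneg (gR γ m)
  have e1 : -s₁ = gG γ b m := speed_eq hbm (by linarith) (by
    have : ub - um = -s₁ * (b - m) := by linarith
    rw [this] at R1b; linarith)
  have e2 : s₂ = gG γ a m := speed_eq ham (by linarith) (by
    have : um - ua = -s₂ * (m - a) := by linarith
    rw [this] at R2b; linarith)
  have f1 : ub - um = -gS γ b m := by
    rw [gS_eq hbm, ← e1]; linarith
  have f2 : um - ua = -gS γ a m := by
    rw [gS_eq ham, ← e2]; linarith
  have n1 : m - b ≤ max |b - m| |ub - um| := by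
    refine le_trans ?_ (le_max_left _ _)
    rw [abs_sub_comm]; exact le_abs_self _
  have n2 : m - a ≤ max |m - a| |um - ua| := le_trans (le_abs_self _) (le_max_left _ _)
  obtain ⟨w, hw, hwa, hwb, hsum, E0, E1, E2⟩ := core_s15 (k := k) (c := c) hγ hkp ha hb ham hbm
    (by linarith) hc (Real.sqrt_le_sqrt (gR_le hγ hm hm2))
  rw [← hK] at E1 E2
  have ga := gG_lt hγ hw hwa
  have gb := gG_lt hγ hw hwb
  have hbound : (m - b) * (m - a) ≤ max |b - m| |ub - um| * max |m - a| |um - ua| :=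
    mul_le_mul n1 n2 (by linarith) (by linarith)
  have hpos : 0 ≤ (m - b) * (m - a) := mul_nonneg (by linarith) (by linarith)
  have q1 : 0 ≤ K / (2 * c ^ 2) := by positivity
  have q2 : 0 ≤ K / (2 * c) := by positivity
  set P := max |b - m| |ub - um| * max |m - a| |um - ua|
  have hC : ∀ x, (x ≤ K / (2 * c ^ 2) * ((m - b) * (m - a)) ∨
      x ≤ K / (2 * c) * ((m - b) * (m - a))) → x ≤ (K / (2 * c ^ 2) + K / (2 * c)) * P := by
    intro x hx
    have t1 := mul_le_mul_of_nonneg_left hbound q1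
    have t2 := mul_le_mul_of_nonneg_left hbound q2
    have t3 := mul_nonneg q1 hpos
    have t4 := mul_nonneg q2 hpos
    rw [add_mul]
    rcases hx with hx | hx <;> linarith
  have sa := gS_eq (γ := γ) hwa
  have sb := gS_eq (γ := γ) hwb
  have ta := gG_sq hγ hw hwa
  have tb := gG_sq hγ hw hwb
  refine ⟨(w, ua - gS γ w a), -gG γ w a, gG γ w b, hw, ?_, ?_, ?_, ?_, ?_, ?_, ?_, ?_, ?_, ?_⟩
  · simp only [Prod.mk_sub_mk, Prod.smul_mk, Prod.mk_add_mk, smul_eq_mul, Prod.mk_eq_zero]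
    rw [sa]
    constructor
    · ring
    · linarith
  · simp only [Prod.mk_sub_mk, Prod.smul_mk, Prod.mk_add_mk, smul_eq_mul, Prod.mk_eq_zero]
    have : ub = ua - gS γ w a - gS γ w b := by linarith
    rw [this, sb]
    constructor
    · ring
    · linarith
  · change -Real.sqrt (gR γ w) < _
    linarith
  · change _ < -Real.sqrt (gR γ a)
    linarith
  · change -Real.sqrt (gR γ a) < 0
    linarith [Real.sqrt_pos.2 (gR_pos hγ ha)]
  · exact Real.sqrt_pos.2 (gR_pos hγ hb)
  · exact gb.1
  · exact gb.2
  · simp only [Prod.mk_sub_mk, Prod.norm_mk, Real.norm_eq_abs]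
    rw [mul_assoc]
    refine (abs_max_sub_max_le_max _ _ _ _).trans (max_le ?_ ?_)
    · apply hC; left
      rw [abs_of_neg (show w - a < 0 by linarith), abs_of_neg (show b - m < 0 by linarith),
        abs_le]
      constructor <;> linarith
    · apply hC; right
      rw [f1, show ua - gS γ w a - ua = - gS γ w a by ring, abs_neg, abs_neg,
        abs_of_nonneg (gS_nonneg _ _ _), abs_of_nonneg (gS_nonneg _ _ _)]
      exact E2
  · simp only [Prod.mk_sub_mk, Prod.norm_mk, Real.norm_eq_abs]
    rw [mul_assoc]
    refine (abs_max_sub_max_le_max _ _ _ _).trans (max_le ?_ ?_)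
    · apply hC; left
      rw [abs_of_pos (show 0 < b - w by linarith), abs_of_pos (show 0 < m - a by linarith),
        abs_le]
      constructor <;> linarith
    · apply hC; right
      rw [f2, show ub - (ua - gS γ w a) = - gS γ w b by linarith, abs_neg, abs_neg,
        abs_of_nonneg (gS_nonneg _ _ _), abs_of_nonneg (gS_nonneg _ _ _),
        show gS γ w b - gS γ a m = -(gS γ w a - gS γ b m) by linarith, abs_neg]
      exact E2
end
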